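/- arXiv:2207.11544 — 2 statements merged into one kernel-verified Lean document; each statement's English description precedes it below -/
import Mathlib

section
/- Let q ∈ ℝ and let M : ℝ² × (0,∞) → ℝ be smooth, parabolically homogeneous of degree q (M(λx, λ²t) = λ^q M(x,t) for all λ > 0), and such that for every multi-index k = (k₁,k₂) and integer s ≥ 0 there are constants C, c > 0 with |∂_{x₁}^{k₁}∂_{x₂}^{k₂}∂_t^s M(x,t)| ≤ C t^{(q−k₁−k₂−2s)/2} e^{−c|x|²/t} for all x ∈ ℝ², t > 0. For i ∈ {1,2}, let ∂_iE(y) = y_i/(2π|y|²) and J_i(x, y₂, t) = ∫_ℝ ∂_iE(y₁, y₂) M(x₁ − y₁, x₂, t) dy₁. Then for every multi-index k = (k₁,k₂) and integers l, s ≥ 0 there exist constants C, c > 0 such that for all x₁ ∈ ℝ, x₂ > 0, y₂ > 0, t > 0: |∂_{x₁}^{k₁}∂_{x₂}^{k₂}∂_{y₂}^{l}∂_t^{s} J_i(x, y₂, t)| ≤ C t^{(q+1−2s−k₂)/2} (x₁² + (x₂+y₂)² + t)^{−(k₁+l+1)/2} e^{−c x₂²/t}. -/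
/-- The `i`-th partial derivative of the fundamental solution `E(y) = (1/2π) log|y|`
of the Laplacian on `ℝ²`: `∂_iE(y) = y_i/(2π|y|²)`. -/
noncomputable def dE (i : Fin 2) (y₁ y₂ : ℝ) : ℝ :=
  (if i = 0 then y₁ else y₂) / (2 * Real.pi * (y₁ ^ 2 + y₂ ^ 2))

/-- The half-space kernel `J_i(x,y₂,t) = ∫_ℝ ∂_iE(y₁,y₂) M(x₁−y₁,x₂,t) dy₁`. -/
noncomputable def Jint (M : ℝ → ℝ → ℝ → ℝ) (i : Fin 2) (x₁ x₂ y₂ t : ℝ) : ℝ :=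
  ∫ y₁ : ℝ, dE i y₁ y₂ * M (x₁ - y₁) x₂ t

/-- Partial derivative operators on functions of three real variables. -/
noncomputable def D1₃ (f : ℝ → ℝ → ℝ → ℝ) : ℝ → ℝ → ℝ → ℝ :=
  fun a b c => deriv (fun s => f s b c) a
noncomputable def D2₃ (f : ℝ → ℝ → ℝ → ℝ) : ℝ → ℝ → ℝ → ℝ :=
  fun a b c => deriv (fun s => f a s c) b
noncomputable def D3₃ (f : ℝ → ℝ → ℝ → ℝ) : ℝ → ℝ → ℝ → ℝ :=
  fun a b c => deriv (fun s => f a b s) c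

/-- Partial derivative operators on functions of four real variables. -/
noncomputable def D1₄ (f : ℝ → ℝ → ℝ → ℝ → ℝ) : ℝ → ℝ → ℝ → ℝ → ℝ :=
  fun a b c d => deriv (fun s => f s b c d) a
noncomputable def D2₄ (f : ℝ → ℝ → ℝ → ℝ → ℝ) : ℝ → ℝ → ℝ → ℝ → ℝ :=
  fun a b c d => deriv (fun s => f a s c d) b
noncomputable def D3₄ (f : ℝ → ℝ → ℝ → ℝ → ℝ) : ℝ → ℝ → ℝ → ℝ → ℝ :=
  fun a b c d => deriv (fun s => f a b s d) c
noncomputable def D4₄ (f : ℝ → ℝ → ℝ → ℝ → ℝ) : ℝ → ℝ → ℝ → ℝ → ℝ :=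
  fun a b c d => deriv (fun s => f a b c s) d

/-!
Since `∂₁E - i ∂₂E` is the Cauchy kernel `1 / (2πz)`, the function `J_i` is the real part of a
constant times the Cauchy transform of `M(·, x₂, t)` at `z = x₁ + i y₂`. The Cauchy transform
commutes with differentiation, so each `x₁`- or `y₂`-derivative of `J_i` falls on the first variable
of `M`, up to a power of `i`. After `n = k₁ + l` of them the density is an `n`-th derivative `φ⁽ⁿ⁾`,
whose moments of order below `n` vanish, so iterating `z / (z - u) = 1 + u / (z - u)` gives
`z ^ (n + 1) * C[φ⁽ⁿ⁾](z) = ∫ uⁿ φ⁽ⁿ⁾ du + C[u ^ (n + 1) φ⁽ⁿ⁾](z)`. The right-hand side is bounded,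
and this is the decay `|z| ^ -(n + 1)`. Scaling by `√t` restores the dependence on `t`, and the
Gaussian factor in `x₂` pays for replacing `x₁² + y₂² + t` by `x₁² + (x₂ + y₂)² + t`.
-/

open MeasureTheory Set Filter Topology
open scoped ContDiff Real

section IteratedLineDeriv

variable {ι E F : Type*} [NormedAddCommGroup E] [NormedSpace ℝ E]
  [NormedAddCommGroup F] [NormedSpace ℝ F] {U : Set E} {f g : E → F}

theorem lineDeriv_lineDeriv_comm {x : E} (hf : ContDiffAt ℝ 2 f x) (v w : E) :
    lineDeriv ℝ (fun y => lineDeriv ℝ f y v) x w =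
      lineDeriv ℝ (fun y => lineDeriv ℝ f y w) x v := by
  have eq_fderiv (v w : E) :
      lineDeriv ℝ (fun y => lineDeriv ℝ f y v) x w = fderiv ℝ (fderiv ℝ f) x w v := by
    have hd : DifferentiableAt ℝ (fderiv ℝ f) x :=
      (hf.fderiv_right (m := 1) (by norm_num)).differentiableAt one_ne_zero
    have hev : (fun y => lineDeriv ℝ f y v) =ᶠ[𝓝 x] fun y => fderiv ℝ f y v :=
      (hf.eventually (by simp)).mono fun y hy =>
        (hy.differentiableAt two_ne_zero).lineDeriv_eq_fderiv
    rw [hev.lineDeriv_eq, (hd.clm_apply (differentiableAt_const v)).lineDeriv_eq_fderiv,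
      fderiv_clm_apply hd (differentiableAt_const v)]
    simp
  rw [eq_fderiv, eq_fderiv,
    (hf.isSymmSndFDerivAt (by rw [minSmoothness_of_isRCLikeNormedField])).eq]

theorem contDiffOn_lineDeriv (hU : IsOpen U) (hf : ContDiffOn ℝ ∞ f U) (v : E) :
    ContDiffOn ℝ ∞ (fun x => lineDeriv ℝ f x v) U :=
  ((hf.fderiv_of_isOpen hU le_rfl).clm_apply contDiffOn_const).congr fun _ hx =>
    ((hf.contDiffAt (hU.mem_nhds hx)).differentiableAt (by simp)).lineDeriv_eq_fderiv

theorem lineDeriv_eqOn (hU : IsOpen U) (h : EqOn f g U) (v : E) :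
    EqOn (fun x => lineDeriv ℝ f x v) (fun x => lineDeriv ℝ g x v) U := fun _ hx =>
  (h.eventuallyEq_of_mem (hU.mem_nhds hx)).lineDeriv_eq

/-- The iterated directional derivative of `f` along the word `w` in the directions `b`; the
letter at the head of `w` is differentiated last. -/
noncomputable def iteratedLineDeriv (b : ι → E) (w : List ι) (f : E → F) : E → F :=
  w.foldr (fun i g x => lineDeriv ℝ g x (b i)) f

variable {b : ι → E}

theorem iteratedLineDeriv_append (w w' : List ι) :
    iteratedLineDeriv b (w ++ w') f = iteratedLineDeriv b w (iteratedLineDeriv b w' f) :=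
  List.foldr_append

theorem iteratedLineDeriv_replicate (n : ℕ) (i : ι) :
    iteratedLineDeriv b (List.replicate n i) f = (fun g x => lineDeriv ℝ g x (b i))^[n] f := by
  induction n with
  | zero => rfl
  | succ n ih => rw [Function.iterate_succ_apply', ← ih]; rfl

theorem contDiffOn_iteratedLineDeriv (hU : IsOpen U) (hf : ContDiffOn ℝ ∞ f U) (w : List ι) :
    ContDiffOn ℝ ∞ (iteratedLineDeriv b w f) U := by
  induction w with
  | nil => exact hf
  | cons i w ih => exact contDiffOn_lineDeriv hU ih (b i)

theorem iteratedLineDeriv_eqOn_of_perm (hU : IsOpen U) (hf : ContDiffOn ℝ ∞ f U) {w w' : List ι}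
    (h : w.Perm w') : EqOn (iteratedLineDeriv b w f) (iteratedLineDeriv b w' f) U := by
  induction h with
  | nil => exact fun _ _ => rfl
  | cons i _ ih => exact lineDeriv_eqOn hU ih (b i)
  | swap i j w =>
    intro x hx
    exact lineDeriv_lineDeriv_comm
      (((contDiffOn_iteratedLineDeriv hU hf w).contDiffAt (hU.mem_nhds hx)).of_le
        ENat.LEInfty.out) (b i) (b j)
  | trans _ _ ih ih' => exact ih.trans ih'

end IteratedLineDeriv

section PartialDerivatives

/-- The coordinate directions of `ℝ² × ℝ ∋ ((x₁, x₂), t)`, indexed as `x₁`, `x₂`, `t`. -/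
def axis : Fin 3 → ℝ × ℝ × ℝ := ![(1, 0, 0), (0, 1, 0), (0, 0, 1)]

theorem lineDeriv_axis_zero (f : ℝ × ℝ × ℝ → ℝ) (x₁ x₂ t : ℝ) :
    lineDeriv ℝ f (x₁, x₂, t) (axis 0) = deriv (fun s => f (s, x₂, t)) x₁ := by
  simp [lineDeriv, axis, deriv_comp_const_add (f := fun s => f (s, x₂, t))]

theorem lineDeriv_axis_one (f : ℝ × ℝ × ℝ → ℝ) (x₁ x₂ t : ℝ) :
    lineDeriv ℝ f (x₁, x₂, t) (axis 1) = deriv (fun s => f (x₁, s, t)) x₂ := by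
  simp [lineDeriv, axis, deriv_comp_const_add (f := fun s => f (x₁, s, t))]

theorem lineDeriv_axis_two (f : ℝ × ℝ × ℝ → ℝ) (x₁ x₂ t : ℝ) :
    lineDeriv ℝ f (x₁, x₂, t) (axis 2) = deriv (fun s => f (x₁, x₂, s)) t := by
  simp [lineDeriv, axis, deriv_comp_const_add (f := fun s => f (x₁, x₂, s))]

theorem uncurry_iterate_partials (k₁ k₂ s : ℕ) (M : ℝ → ℝ → ℝ → ℝ) :
    ↿(D1₃^[k₁] (D2₃^[k₂] (D3₃^[s] M))) =
      iteratedLineDeriv axis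
        (List.replicate k₁ 0 ++ (List.replicate k₂ 1 ++ List.replicate s 2)) ↿M := by
  have h₁ : Function.Semiconj (fun f : ℝ → ℝ → ℝ → ℝ => ↿f) D1₃
      fun g p => lineDeriv ℝ g p (axis 0) :=
    fun f => funext fun p => (lineDeriv_axis_zero ↿f p.1 p.2.1 p.2.2).symm
  have h₂ : Function.Semiconj (fun f : ℝ → ℝ → ℝ → ℝ => ↿f) D2₃
      fun g p => lineDeriv ℝ g p (axis 1) :=
    fun f => funext fun p => (lineDeriv_axis_one ↿f p.1 p.2.1 p.2.2).symm
  have h₃ : Function.Semiconj (fun f : ℝ → ℝ → ℝ → ℝ => ↿f) D3₃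
      fun g p => lineDeriv ℝ g p (axis 2) :=
    fun f => funext fun p => (lineDeriv_axis_two ↿f p.1 p.2.1 p.2.2).symm
  simp only [iteratedLineDeriv_append, iteratedLineDeriv_replicate]
  rw [← (h₃.iterate_right s).eq, ← (h₂.iterate_right k₂).eq, ← (h₁.iterate_right k₁).eq]

theorem iteratedLineDeriv_axis_replicate_zero (n : ℕ) (N : ℝ × ℝ × ℝ → ℝ) (x₂ t : ℝ) :
    (fun u => iteratedLineDeriv axis (List.replicate n 0) N (u, x₂, t)) =
      iteratedDeriv n fun u => N (u, x₂, t) := by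
  induction n with
  | zero => simp [iteratedLineDeriv]
  | succ n ih =>
    rw [iteratedDeriv_succ, ← ih]
    exact funext fun u => lineDeriv_axis_zero _ u x₂ t

theorem perm_replicate_count (w : List (Fin 3)) :
    w.Perm (List.replicate (w.count 0) 0 ++
      (List.replicate (w.count 1) 1 ++ List.replicate (w.count 2) 2)) := by
  refine List.perm_iff_count.2 fun j => ?_
  fin_cases j <;> simp [List.count_replicate]

end PartialDerivatives

section GaussianKernels

/-- The parabolic order of `∂^w`: a derivative in `t` counts twice. -/
def parabolicOrder (w : List (Fin 3)) : ℕ := (w.map ![1, 1, 2]).sum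

theorem parabolicOrder_append (w w' : List (Fin 3)) :
    parabolicOrder (w ++ w') = parabolicOrder w + parabolicOrder w' := by
  simp [parabolicOrder]

theorem parabolicOrder_replicate (n : ℕ) (j : Fin 3) :
    parabolicOrder (List.replicate n j) = n * ![1, 1, 2] j := by
  simp [parabolicOrder]

/-- `N` is smooth on `ℝ² × (0, ∞)` and each of its derivatives obeys the Gaussian bound of a
heat-type kernel of parabolic degree `r`. -/
structure IsGaussianKernel (r : ℝ) (N : ℝ × ℝ × ℝ → ℝ) : Prop where
  contDiffOn : ContDiffOn ℝ ∞ N {p | 0 < p.2.2}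
  exists_bound (w : List (Fin 3)) : ∃ C > 0, ∃ c > 0, ∀ x₁ x₂ t : ℝ, 0 < t →
    |iteratedLineDeriv axis w N (x₁, x₂, t)| ≤
      C * t ^ ((r - parabolicOrder w) / 2) * Real.exp (-c * (x₁ ^ 2 + x₂ ^ 2) / t)

theorem isOpen_snd_snd_pos : IsOpen {p : ℝ × ℝ × ℝ | 0 < p.2.2} :=
  isOpen_lt continuous_const (continuous_snd.comp continuous_snd)

theorem isGaussianKernel_of_ordered_bounds {q : ℝ} {M : ℝ → ℝ → ℝ → ℝ}
    (hM : ContDiffOn ℝ ∞ ↿M {p | 0 < p.2.2})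
    (hbound : ∀ k₁ k₂ s : ℕ, ∃ C > (0 : ℝ), ∃ c > (0 : ℝ), ∀ x₁ x₂ : ℝ, ∀ t > (0 : ℝ),
      |(D1₃^[k₁] (D2₃^[k₂] (D3₃^[s] M))) x₁ x₂ t|
        ≤ C * t ^ ((q - (k₁ : ℝ) - (k₂ : ℝ) - 2 * (s : ℝ)) / 2)
            * Real.exp (-c * (x₁ ^ 2 + x₂ ^ 2) / t)) :
    IsGaussianKernel q ↿M where
  contDiffOn := hM
  exists_bound w := by
    obtain ⟨C, hC, c, hc, h⟩ := hbound (w.count 0) (w.count 1) (w.count 2)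
    refine ⟨C, hC, c, hc, fun x₁ x₂ t ht => ?_⟩
    have hw := perm_replicate_count w
    have horder : (parabolicOrder w : ℝ) = w.count 0 + w.count 1 + 2 * w.count 2 := by
      rw [show parabolicOrder w = _ from (hw.map ![1, 1, 2]).sum_eq]
      simp [add_assoc, mul_comm]
    rw [iteratedLineDeriv_eqOn_of_perm isOpen_snd_snd_pos hM hw (x := (x₁, x₂, t)) ht,
      ← uncurry_iterate_partials, horder, ← sub_sub, ← sub_sub]
    exact h x₁ x₂ t ht

namespace IsGaussianKernel

variable {r : ℝ} {N : ℝ × ℝ × ℝ → ℝ}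

theorem iterated_lineDeriv (h : IsGaussianKernel r N) (w : List (Fin 3)) :
    IsGaussianKernel (r - parabolicOrder w) (iteratedLineDeriv axis w N) where
  contDiffOn := contDiffOn_iteratedLineDeriv isOpen_snd_snd_pos h.contDiffOn w
  exists_bound w' := by
    have hb := h.exists_bound (w' ++ w)
    rwa [iteratedLineDeriv_append, parabolicOrder_append, add_comm (parabolicOrder w'),
      Nat.cast_add, ← sub_sub] at hb

theorem contDiffAt (h : IsGaussianKernel r N) {t : ℝ} (ht : 0 < t) (x₁ x₂ : ℝ) :
    ContDiffAt ℝ ∞ N (x₁, x₂, t) :=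
  h.contDiffOn.contDiffAt (isOpen_snd_snd_pos.mem_nhds ht)

theorem contDiff_slice (h : IsGaussianKernel r N) {t : ℝ} (ht : 0 < t) (x₂ : ℝ) :
    ContDiff ℝ ∞ fun u => N (u, x₂, t) :=
  contDiff_iff_contDiffAt.2 fun u =>
    (h.contDiffAt ht u x₂).comp u (by fun_prop : ContDiff ℝ ∞ fun u : ℝ => (u, x₂, t)).contDiffAt

theorem hasDerivAt_fst (h : IsGaussianKernel r N) {t : ℝ} (ht : 0 < t) (x₁ x₂ : ℝ) :
    HasDerivAt (fun u => N (u, x₂, t)) (iteratedLineDeriv axis [0] N (x₁, x₂, t)) x₁ := by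
  rw [show iteratedLineDeriv axis [0] N (x₁, x₂, t) = _ from lineDeriv_axis_zero N x₁ x₂ t]
  exact (((h.contDiffAt ht x₁ x₂).differentiableAt (by simp)).comp x₁
    (by fun_prop : DifferentiableAt ℝ (fun u : ℝ => (u, x₂, t)) x₁)).hasDerivAt

theorem hasDerivAt_snd (h : IsGaussianKernel r N) {t : ℝ} (ht : 0 < t) (x₁ x₂ : ℝ) :
    HasDerivAt (fun x => N (x₁, x, t)) (iteratedLineDeriv axis [1] N (x₁, x₂, t)) x₂ := by
  rw [show iteratedLineDeriv axis [1] N (x₁, x₂, t) = _ from lineDeriv_axis_one N x₁ x₂ t]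
  exact (((h.contDiffAt ht x₁ x₂).differentiableAt (by simp)).comp x₂
    (by fun_prop : DifferentiableAt ℝ (fun x : ℝ => (x₁, x, t)) x₂)).hasDerivAt

theorem hasDerivAt_time (h : IsGaussianKernel r N) {t : ℝ} (ht : 0 < t) (x₁ x₂ : ℝ) :
    HasDerivAt (fun s => N (x₁, x₂, s)) (iteratedLineDeriv axis [2] N (x₁, x₂, t)) t := by
  rw [show iteratedLineDeriv axis [2] N (x₁, x₂, t) = _ from lineDeriv_axis_two N x₁ x₂ t]
  exact (((h.contDiffAt ht x₁ x₂).differentiableAt (by simp)).comp t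
    (by fun_prop : DifferentiableAt ℝ (fun s : ℝ => (x₁, x₂, s)) t)).hasDerivAt

theorem exists_eventually_abs_le (h : IsGaussianKernel r N) {t₀ : ℝ} (ht₀ : 0 < t₀) :
    ∃ K, ∃ c > 0, ∀ᶠ t in 𝓝 t₀, ∀ u x₂, |N (u, x₂, t)| ≤ K * Real.exp (-c * u ^ 2) := by
  obtain ⟨C, hC, c, hc, hb⟩ := h.exists_bound []
  set p := (r - parabolicOrder []) / 2
  have hrpow : ∀ᶠ t in 𝓝 t₀, t ^ p < t₀ ^ p + 1 :=
    (Real.continuousAt_rpow_const t₀ p (.inl ht₀.ne')).eventually_lt_const (lt_add_one _)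
  refine ⟨C * (t₀ ^ p + 1), c / (2 * t₀), by positivity, ?_⟩
  filter_upwards [hrpow, lt_mem_nhds ht₀, gt_mem_nhds (by linarith : t₀ < 2 * t₀)]
    with t htp ht ht₂ u x₂
  have hexp : -c * (u ^ 2 + x₂ ^ 2) / t ≤ -(c / (2 * t₀)) * u ^ 2 := by
    rw [neg_mul, neg_mul, neg_div, neg_le_neg_iff, div_mul_eq_mul_div]
    gcongr
    exact le_add_of_nonneg_right (sq_nonneg x₂)
  calc |N (u, x₂, t)| ≤ C * t ^ p * Real.exp (-c * (u ^ 2 + x₂ ^ 2) / t) := hb u x₂ t ht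
    _ ≤ C * (t₀ ^ p + 1) * Real.exp (-(c / (2 * t₀)) * u ^ 2) := by gcongr

theorem integrable_slice (h : IsGaussianKernel r N) {t : ℝ} (ht : 0 < t) (x₂ : ℝ) :
    Integrable fun u => N (u, x₂, t) := by
  obtain ⟨K, c, hc, hK⟩ := h.exists_eventually_abs_le ht
  exact ((integrable_exp_neg_mul_sq hc).const_mul K).mono'
    (h.contDiff_slice ht x₂).continuous.aestronglyMeasurable
    (.of_forall fun u => hK.self_of_nhds u x₂)

theorem exists_bound_iteratedDeriv (h : IsGaussianKernel r N) (n : ℕ) :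
    ∃ C > 0, ∃ c > 0, ∀ m ≤ n, ∀ u x₂ t : ℝ, 0 < t →
      |iteratedDeriv m (fun u => N (u, x₂, t)) u| ≤
        C * t ^ ((r - m) / 2) * Real.exp (-c * (u ^ 2 + x₂ ^ 2) / t) := by
  have hone (m : ℕ) : ∃ C > 0, ∃ c > 0, ∀ u x₂ t : ℝ, 0 < t →
      |iteratedDeriv m (fun u => N (u, x₂, t)) u| ≤
        C * t ^ ((r - m) / 2) * Real.exp (-c * (u ^ 2 + x₂ ^ 2) / t) := by
    simpa [← iteratedLineDeriv_axis_replicate_zero, parabolicOrder_replicate] using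
      h.exists_bound (List.replicate m 0)
  choose C hC c hc hb using hone
  have hne : (Finset.range (n + 1)).Nonempty := ⟨0, by simp⟩
  have hCsum : 0 < ∑ m ∈ Finset.range (n + 1), C m := Finset.sum_pos (fun m _ => hC m) hne
  refine ⟨_, hCsum, (Finset.range (n + 1)).inf' hne c, (Finset.lt_inf'_iff hne).2 fun m _ => hc m,
    fun m hm u x₂ t ht => (hb m u x₂ t ht).trans ?_⟩
  have hmem : m ∈ Finset.range (n + 1) := Finset.mem_range_succ_iff.2 hm
  gcongr
  · exact Finset.single_le_sum (fun m _ => (hC m).le) hmem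
  · exact Finset.inf'_le c hmem

end IsGaussianKernel

end GaussianKernels

section CauchyTransform

/-- The Cauchy transform `∫ g(u) / (z - u) du` of a density on the real line, for `z` off the real
axis. -/
noncomputable def cauchyTransform (g : ℝ → ℝ) (z : ℂ) : ℂ := ∫ u : ℝ, g u • (z - u)⁻¹

variable {g g' : ℝ → ℝ} {z : ℂ}

theorem sub_ofReal_ne_zero (hz : z.im ≠ 0) (u : ℝ) : z - u ≠ 0 := fun h =>
  hz (by simpa using congrArg Complex.im h)

theorem norm_inv_sub_ofReal_le (hz : z.im ≠ 0) (u : ℝ) : ‖(z - u)⁻¹‖ ≤ |z.im|⁻¹ := by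
  rw [norm_inv]
  gcongr
  simpa using Complex.abs_im_le_norm (z - u)

theorem continuous_inv_sub_ofReal (hz : z.im ≠ 0) : Continuous fun u : ℝ => (z - u)⁻¹ :=
  (by fun_prop : Continuous fun u : ℝ => z - u).inv₀ (sub_ofReal_ne_zero hz)

theorem integrable_smul_inv_sub_ofReal (hz : z.im ≠ 0) (hg : Integrable g) :
    Integrable fun u : ℝ => g u • (z - u)⁻¹ :=
  hg.smul_bdd |z.im|⁻¹ (continuous_inv_sub_ofReal hz).aestronglyMeasurable
    (.of_forall (norm_inv_sub_ofReal_le hz))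

theorem hasDerivAt_inv_sub_ofReal (hz : z.im ≠ 0) (u : ℝ) :
    HasDerivAt (fun u : ℝ => (z - u)⁻¹) ((z - u) ^ 2)⁻¹ u := by
  simpa using (Complex.ofRealCLM.hasDerivAt.const_sub z).fun_inv (sub_ofReal_ne_zero hz u)

theorem integrable_smul_inv_sub_ofReal_sq (hz : z.im ≠ 0) (hg : Integrable g) :
    Integrable fun u : ℝ => g u • ((z - u) ^ 2)⁻¹ := by
  refine hg.smul_bdd (|z.im|⁻¹ ^ 2)
    (by simpa only [inv_pow] using
      ((continuous_inv_sub_ofReal hz).fun_pow 2).aestronglyMeasurable)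
    (.of_forall fun u => ?_)
  rw [← inv_pow, norm_pow]
  gcongr
  exact norm_inv_sub_ofReal_le hz u

theorem cauchyTransform_deriv_eq (hz : z.im ≠ 0) (hderiv : ∀ u, HasDerivAt g (g' u) u)
    (hg : Integrable g) (hg' : Integrable g') :
    cauchyTransform g' z = ∫ u : ℝ, -(g u • ((z - u) ^ 2)⁻¹) := by
  have hparts : ∫ u : ℝ, g u • ((z - u) ^ 2)⁻¹ = -cauchyTransform g' z :=
    integral_bilinear_hasDerivAt_right_eq_neg_left_of_integrable
      (L := ContinuousLinearMap.lsmul ℝ ℝ) (fun u _ => hderiv u)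
      (fun u _ => hasDerivAt_inv_sub_ofReal hz u) (integrable_smul_inv_sub_ofReal_sq hz hg)
      (integrable_smul_inv_sub_ofReal hz hg') (integrable_smul_inv_sub_ofReal hz hg)
  rw [integral_neg, hparts, neg_neg]

theorem hasDerivAt_cauchyTransform (hz : z.im ≠ 0) (hderiv : ∀ u, HasDerivAt g (g' u) u)
    (hg : Integrable g) (hg' : Integrable g') :
    HasDerivAt (cauchyTransform g) (cauchyTransform g' z) z := by
  rw [cauchyTransform_deriv_eq hz hderiv hg hg']
  have hδ : 0 < |z.im| / 2 := by positivity
  have him : ∀ w ∈ Metric.ball z (|z.im| / 2), |z.im| / 2 ≤ |w.im| := fun w hw => by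
    have h₁ := Complex.abs_im_le_norm (w - z)
    have h₂ : ‖w - z‖ < |z.im| / 2 := by simpa [dist_eq_norm] using hw
    have h₃ := abs_sub_abs_le_abs_sub z.im w.im
    rw [Complex.sub_im, abs_sub_comm] at h₁
    linarith
  have hne : ∀ w ∈ Metric.ball z (|z.im| / 2), w.im ≠ 0 := fun w hw =>
    abs_pos.1 (hδ.trans_le (him w hw))
  refine (hasDerivAt_integral_of_dominated_loc_of_deriv_le
    (F' := fun w (u : ℝ) => -(g u • ((w - u) ^ 2)⁻¹))
    (bound := fun u => |g u| * ((|z.im| / 2)⁻¹) ^ 2) (Metric.ball_mem_nhds z hδ) ?_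
    (integrable_smul_inv_sub_ofReal hz hg)
    (integrable_smul_inv_sub_ofReal_sq hz hg).neg.aestronglyMeasurable
    (.of_forall fun u w hw => ?_) (hg.abs.mul_const _) (.of_forall fun u w hw => ?_)).2
  · filter_upwards [Metric.ball_mem_nhds z hδ] with w hw
    exact (integrable_smul_inv_sub_ofReal (hne w hw) hg).aestronglyMeasurable
  · rw [norm_neg, norm_smul, Real.norm_eq_abs, ← inv_pow, norm_pow]
    gcongr
    exact (norm_inv_sub_ofReal_le (hne w hw) u).trans (by gcongr; exact him w hw)
  · have := ((hasDerivAt_id w).sub_const (u : ℂ)).fun_inv (sub_ofReal_ne_zero (hne w hw) u)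
    simpa [div_eq_mul_inv] using this.fun_const_smul (g u)

theorem hasDerivAt_cauchyTransform_param {f f' : ℝ → ℝ → ℝ} {bound : ℝ → ℝ} {a : ℝ}
    (hz : z.im ≠ 0) (hf : ∀ᶠ b in 𝓝 a, Integrable (f b)) (hf' : AEStronglyMeasurable (f' a))
    (hbound : ∀ᶠ b in 𝓝 a, ∀ u, |f' b u| ≤ bound u) (hint : Integrable bound)
    (hderiv : ∀ᶠ b in 𝓝 a, ∀ u, HasDerivAt (fun b => f b u) (f' b u) b) :
    HasDerivAt (fun b => cauchyTransform (f b) z) (cauchyTransform (f' a) z) a := by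
  refine (hasDerivAt_integral_of_dominated_loc_of_deriv_le
    (F' := fun b (u : ℝ) => f' b u • (z - u)⁻¹) (bound := fun u => bound u * |z.im|⁻¹)
    (hbound.and hderiv) ?_
    (integrable_smul_inv_sub_ofReal hz hf.self_of_nhds)
    (hf'.smul (continuous_inv_sub_ofReal hz).aestronglyMeasurable)
    (.of_forall fun u b hb => ?_) (hint.mul_const _) (.of_forall fun u b hb => ?_)).2
  · exact hf.mono fun b hb => (integrable_smul_inv_sub_ofReal hz hb).aestronglyMeasurable
  · rw [norm_smul]
    exact mul_le_mul (hb.1 u) (norm_inv_sub_ofReal_le hz u) (norm_nonneg _)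
      ((abs_nonneg _).trans (hb.1 u))
  · exact (hb.2 u).smul_const _

theorem norm_integral_inv_sub_ofReal_le (hz : z.im ≠ 0) (R : ℝ) :
    ‖∫ u in (z.re - R)..(z.re + R), (z - u)⁻¹‖ ≤ 2 * π := by
  have hderiv (u : ℝ) : HasDerivAt (fun u : ℝ => -Complex.log (z - u)) (z - u)⁻¹ u := by
    have hmem : z - u ∈ Complex.slitPlane := Or.inr (by simpa using hz)
    simpa [div_eq_mul_inv] using
      ((Complex.ofRealCLM.hasDerivAt.const_sub z).clog_real hmem).fun_neg
  rw [intervalIntegral.integral_eq_sub_of_hasDerivAt (fun u _ => hderiv u)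
    ((continuous_inv_sub_ofReal hz).intervalIntegrable _ _)]
  have hnorm : ‖z - (z.re - R : ℝ)‖ = ‖z - (z.re + R : ℝ)‖ := by
    simp [Complex.norm_def, Complex.normSq_apply]
  have him : -Complex.log (z - (z.re + R : ℝ)) - -Complex.log (z - (z.re - R : ℝ)) =
      ((z - (z.re - R : ℝ)).arg - (z - (z.re + R : ℝ)).arg : ℝ) * Complex.I := by
    apply Complex.ext
    · simp only [Complex.sub_re, Complex.neg_re, Complex.log_re, hnorm, Complex.re_ofReal_mul,
        Complex.I_re, mul_zero, sub_self]
    · simp only [Complex.sub_im, Complex.neg_im, Complex.log_im, Complex.im_ofReal_mul,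
        Complex.I_im, mul_one]
      ring
  rw [him, norm_mul, Complex.norm_I, mul_one, Complex.norm_real, two_mul]
  exact (norm_sub_le _ _).trans (add_le_add (Complex.abs_arg_le_pi _) (Complex.abs_arg_le_pi _))

theorem abs_re_sub_le_norm_sub_ofReal (z : ℂ) (u : ℝ) : |z.re - u| ≤ ‖z - u‖ := by
  simpa using Complex.abs_re_le_norm (z - u)

theorem norm_integral_sub_smul_inv_sub_ofReal_le {L : ℝ} (hz : z.im ≠ 0)
    (hderiv : ∀ u, HasDerivAt g (g' u) u) (hL : ∀ u, |g' u| ≤ L) :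
    ‖∫ u in (z.re - 1)..(z.re + 1), (g u - g z.re) • (z - u)⁻¹‖ ≤ 2 * L := by
  have hbd : ∀ u ∈ uIoc (z.re - 1) (z.re + 1), ‖(g u - g z.re) • (z - u)⁻¹‖ ≤ L := fun u _ => by
    have hlip : |g u - g z.re| ≤ L * |u - z.re| :=
      convex_univ.norm_image_sub_le_of_norm_hasDerivWithin_le (𝕜 := ℝ)
        (fun y _ => (hderiv y).hasDerivWithinAt) (fun y _ => hL y) (mem_univ _) (mem_univ u)
    rw [norm_smul, norm_inv, ← div_eq_mul_inv,
      div_le_iff₀ (norm_pos_iff.2 (sub_ofReal_ne_zero hz u))]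
    refine hlip.trans (mul_le_mul_of_nonneg_left ?_ ((abs_nonneg _).trans (hL 0)))
    exact (abs_sub_comm u z.re).trans_le (abs_re_sub_le_norm_sub_ofReal z u)
  refine (intervalIntegral.norm_integral_le_of_norm_le_const hbd).trans_eq ?_
  rw [show z.re + 1 - (z.re - 1) = 2 by ring, abs_two, mul_comm]

theorem norm_setIntegral_compl_smul_inv_sub_ofReal_le (hg : Integrable g) :
    ‖∫ u in (Ioc (z.re - 1) (z.re + 1))ᶜ, g u • (z - u)⁻¹‖ ≤ ∫ u, |g u| := by
  refine (norm_integral_le_of_norm_le hg.abs.integrableOn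
    ((ae_restrict_iff' measurableSet_Ioc.compl).2 (.of_forall fun u hu => ?_))).trans
    (setIntegral_le_integral hg.abs (.of_forall fun u => abs_nonneg _))
  have hone : 1 ≤ |z.re - u| := by
    by_contra! h
    exact hu ⟨by linarith [(abs_lt.1 h).2], by linarith [(abs_lt.1 h).1]⟩
  rw [norm_smul, norm_inv]
  exact mul_le_of_le_one_right (abs_nonneg _)
    (inv_le_one_of_one_le₀ (hone.trans (abs_re_sub_le_norm_sub_ofReal z u)))

theorem norm_cauchyTransform_le {L : ℝ} (hz : z.im ≠ 0) (hderiv : ∀ u, HasDerivAt g (g' u) u)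
    (hg : Integrable g) (hL : ∀ u, |g' u| ≤ L) :
    ‖cauchyTransform g z‖ ≤ 2 * L + 2 * π * |g z.re| + ∫ u, |g u| := by
  -- Near `z.re` the kernel is not absolutely integrable uniformly in `z`, so `g z.re` is subtracted
  -- there; the kernel itself integrates to a difference of arguments, which is bounded.
  have hcont := continuous_inv_sub_ofReal hz
  have hgcont : Continuous g := continuous_iff_continuousAt.2 fun u => (hderiv u).continuousAt
  have hnear : IntervalIntegrable (fun u => (g u - g z.re) • (z - u)⁻¹) volume
      (z.re - 1) (z.re + 1) :=
    ((hgcont.sub continuous_const).smul hcont).intervalIntegrable _ _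
  have hcenter : IntervalIntegrable (fun u : ℝ => g z.re • (z - u)⁻¹) volume
      (z.re - 1) (z.re + 1) := (hcont.const_smul (g z.re)).intervalIntegrable _ _
  have hsplit : cauchyTransform g z =
      (∫ u in (z.re - 1)..(z.re + 1), (g u - g z.re) • (z - u)⁻¹) +
        g z.re • (∫ u in (z.re - 1)..(z.re + 1), (z - u)⁻¹) +
          ∫ u in (Ioc (z.re - 1) (z.re + 1))ᶜ, g u • (z - u)⁻¹ := by
    rw [cauchyTransform,
      ← integral_add_compl measurableSet_Ioc (integrable_smul_inv_sub_ofReal hz hg),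
      ← intervalIntegral.integral_of_le (by linarith : z.re - 1 ≤ z.re + 1),
      ← intervalIntegral.integral_smul,
      ← intervalIntegral.integral_add hnear hcenter]
    simp only [sub_smul, sub_add_cancel]
  rw [hsplit]
  refine norm_add₃_le.trans (add_le_add_three
    (norm_integral_sub_smul_inv_sub_ofReal_le hz hderiv hL) ?_
    (norm_setIntegral_compl_smul_inv_sub_ofReal_le hg))
  rw [norm_smul, Real.norm_eq_abs, mul_comm]
  gcongr
  exact norm_integral_inv_sub_ofReal_le hz 1

theorem mul_cauchyTransform (hz : z.im ≠ 0) (hg : Integrable g)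
    (hug : Integrable fun u => u * g u) :
    z * cauchyTransform g z = (∫ u, g u : ℝ) + cauchyTransform (fun u => u * g u) z := by
  rw [cauchyTransform, cauchyTransform, ← integral_const_mul, ← integral_complex_ofReal,
    ← integral_add (f := fun u => (g u : ℂ)) hg.ofReal (integrable_smul_inv_sub_ofReal hz hug)]
  refine integral_congr_ae (.of_forall fun u => ?_)
  have := sub_ofReal_ne_zero hz u
  simp only [Complex.real_smul, Complex.ofReal_mul]
  field_simp
  ring

theorem pow_mul_cauchyTransform (hz : z.im ≠ 0) (hg : ∀ k, Integrable fun u => u ^ k * g u)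
    {n : ℕ} (hmoment : ∀ k < n, ∫ u, u ^ k * g u = 0) :
    z ^ n * cauchyTransform g z = cauchyTransform (fun u => u ^ n * g u) z := by
  induction n with
  | zero => simp
  | succ n ih =>
    have hmul := mul_cauchyTransform hz (hg n)
      (by simpa only [pow_succ', mul_assoc] using hg (n + 1))
    rw [pow_succ', mul_assoc, ih fun k hk => hmoment k (hk.trans n.lt_succ_self), hmul,
      hmoment n n.lt_succ_self]
    simp [pow_succ', mul_assoc]

theorem cauchyTransform_const_mul (a : ℝ) :
    cauchyTransform (fun u => a * g u) z = a * cauchyTransform g z := by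
  simp only [cauchyTransform, mul_smul, integral_smul]
  rw [Complex.real_smul]

theorem cauchyTransform_comp_mul {τ : ℝ} (hτ : 0 < τ) :
    cauchyTransform (fun u => g (τ * u)) (z / τ) = cauchyTransform g z := by
  have hτ' : (τ : ℂ) ≠ 0 := by exact_mod_cast hτ.ne'
  have hkernel (u : ℝ) : g (τ * u) • (z / τ - u)⁻¹ = τ • (g (τ * u) • (z - (τ * u : ℝ))⁻¹) := by
    rw [smul_comm]
    congr 1
    rw [Complex.real_smul, Complex.ofReal_mul, ← inv_inv (τ : ℂ), ← mul_inv, inv_inv]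
    congr 1
    field_simp
  simp only [cauchyTransform, hkernel]
  rw [integral_smul, Measure.integral_comp_mul_left (fun u : ℝ => g u • (z - u)⁻¹) τ,
    abs_of_pos (inv_pos.2 hτ), smul_inv_smul₀ hτ.ne']

end CauchyTransform

section GaussianDecay

theorem exists_one_add_abs_pow_mul_exp_le (k : ℕ) {c : ℝ} (hc : 0 < c) :
    ∃ A > 0, ∀ u : ℝ,
      (1 + |u|) ^ k * Real.exp (-c * u ^ 2) ≤ A * Real.exp (-(c / 2) * u ^ 2) := by
  refine ⟨k.factorial * Real.exp (1 + 1 / (2 * c)), by positivity, fun u => ?_⟩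
  have hyoung : 1 + |u| ≤ 1 + 1 / (2 * c) + c / 2 * u ^ 2 := by
    have : 1 / (2 * c) + c / 2 * u ^ 2 - |u| = (c * |u| - 1) ^ 2 / (2 * c) := by
      rw [← sq_abs u]
      field_simp
      ring
    linarith [show 0 ≤ (c * |u| - 1) ^ 2 / (2 * c) by positivity]
  have hpow : (1 + |u|) ^ k ≤ k.factorial * Real.exp (1 + |u|) := by
    rw [mul_comm, ← div_le_iff₀ (by positivity)]
    exact Real.pow_div_factorial_le_exp _ (by positivity) k
  calc (1 + |u|) ^ k * Real.exp (-c * u ^ 2)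
      ≤ k.factorial * Real.exp (1 + 1 / (2 * c) + c / 2 * u ^ 2) * Real.exp (-c * u ^ 2) := by
        gcongr
        exact hpow.trans (by gcongr)
    _ = k.factorial * Real.exp (1 + 1 / (2 * c)) * Real.exp (-(c / 2) * u ^ 2) := by
        rw [mul_assoc, mul_assoc, ← Real.exp_add, ← Real.exp_add]
        ring_nf

theorem exists_one_add_abs_pow_mul_abs_le (k : ℕ) {c : ℝ} (hc : 0 < c) :
    ∃ A > 0, ∀ B u y : ℝ, |y| ≤ B * Real.exp (-c * u ^ 2) →
      (1 + |u|) ^ k * |y| ≤ A * B * Real.exp (-(c / 2) * u ^ 2) := by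
  obtain ⟨A, hA, habs⟩ := exists_one_add_abs_pow_mul_exp_le k hc
  refine ⟨A, hA, fun B u y hy => ?_⟩
  have hB : 0 ≤ B := nonneg_of_mul_nonneg_left ((abs_nonneg y).trans hy) (Real.exp_pos _)
  calc (1 + |u|) ^ k * |y| ≤ (1 + |u|) ^ k * (B * Real.exp (-c * u ^ 2)) := by gcongr
    _ = B * ((1 + |u|) ^ k * Real.exp (-c * u ^ 2)) := by ring
    _ ≤ B * (A * Real.exp (-(c / 2) * u ^ 2)) := mul_le_mul_of_nonneg_left (habs u) hB
    _ = A * B * Real.exp (-(c / 2) * u ^ 2) := by ring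

theorem abs_pow_mul_le_one_add_abs_pow_mul (k : ℕ) (u y : ℝ) :
    |u ^ k * y| ≤ (1 + |u|) ^ k * |y| := by
  rw [abs_mul, abs_pow]
  gcongr
  exact le_add_of_nonneg_left zero_le_one

theorem integrable_pow_mul_of_abs_le_exp {g : ℝ → ℝ} {B c : ℝ} (hg : Continuous g) (hc : 0 < c)
    (hb : ∀ u, |g u| ≤ B * Real.exp (-c * u ^ 2)) (k : ℕ) : Integrable fun u => u ^ k * g u := by
  obtain ⟨A, -, hA⟩ := exists_one_add_abs_pow_mul_abs_le k hc
  exact ((integrable_exp_neg_mul_sq (half_pos hc)).const_mul (A * B)).mono'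
    (by fun_prop : Continuous fun u => u ^ k * g u).aestronglyMeasurable
    (.of_forall fun u => (abs_pow_mul_le_one_add_abs_pow_mul k u (g u)).trans (hA B u _ (hb u)))

theorem exists_integral_abs_pow_mul_le (k : ℕ) {c : ℝ} (hc : 0 < c) :
    ∃ K > 0, ∀ (g : ℝ → ℝ) (B : ℝ), (∀ u, |g u| ≤ B * Real.exp (-c * u ^ 2)) →
      ∫ u, |u ^ k * g u| ≤ K * B := by
  obtain ⟨A, hA, habs⟩ := exists_one_add_abs_pow_mul_abs_le k hc
  refine ⟨A * √(π / (c / 2)), by positivity, fun g B hb => ?_⟩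
  calc ∫ u, |u ^ k * g u| ≤ ∫ u : ℝ, A * B * Real.exp (-(c / 2) * u ^ 2) :=
        integral_mono_of_nonneg (.of_forall fun u => abs_nonneg _)
          ((integrable_exp_neg_mul_sq (half_pos hc)).const_mul _) (.of_forall fun u =>
            (abs_pow_mul_le_one_add_abs_pow_mul k u (g u)).trans (habs B u _ (hb u)))
    _ = A * √(π / (c / 2)) * B := by rw [integral_const_mul, integral_gaussian]; ring

theorem exists_norm_cauchyTransform_pow_mul_le (k : ℕ) {c : ℝ} (hc : 0 < c) :
    ∃ K > 0, ∀ (g g' : ℝ → ℝ) (B : ℝ) (z : ℂ), z.im ≠ 0 → (∀ u, HasDerivAt g (g' u) u) →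
      (∀ u, |g u| ≤ B * Real.exp (-c * u ^ 2)) → (∀ u, |g' u| ≤ B * Real.exp (-c * u ^ 2)) →
      ‖cauchyTransform (fun u => u ^ k * g u) z‖ ≤ K * B := by
  obtain ⟨A, hA, habs⟩ := exists_one_add_abs_pow_mul_abs_le k hc
  obtain ⟨I, hI, hint⟩ := exists_integral_abs_pow_mul_le k hc
  refine ⟨2 * (k * A + A) + 2 * π * A + I, by positivity, fun g g' B z hz hderiv hg hg' => ?_⟩
  have hgcont : Continuous g := continuous_iff_continuousAt.2 fun u => (hderiv u).continuousAt
  have hmul (u y : ℝ) (hy : |y| ≤ B * Real.exp (-c * u ^ 2)) : (1 + |u|) ^ k * |y| ≤ A * B := by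
    have hB : 0 ≤ B := nonneg_of_mul_nonneg_left ((abs_nonneg y).trans hy) (Real.exp_pos _)
    refine (habs B u y hy).trans (mul_le_of_le_one_right (by positivity) (Real.exp_le_one_iff.2 ?_))
    nlinarith [sq_nonneg u]
  have hval (u y : ℝ) (hy : |y| ≤ B * Real.exp (-c * u ^ 2)) : |u ^ k * y| ≤ A * B :=
    (abs_pow_mul_le_one_add_abs_pow_mul k u y).trans (hmul u y hy)
  have hslope (u : ℝ) : |k * u ^ (k - 1) * g u + u ^ k * g' u| ≤ k * (A * B) + A * B := by
    refine (abs_add_le _ _).trans (add_le_add ?_ (hval u _ (hg' u)))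
    rw [mul_assoc, abs_mul, Nat.abs_cast]
    gcongr
    refine (abs_pow_mul_le_one_add_abs_pow_mul _ u _).trans (le_trans ?_ (hmul u _ (hg u)))
    gcongr
    · exact le_add_of_nonneg_right (abs_nonneg u)
    · exact k.sub_le 1
  calc ‖cauchyTransform (fun u => u ^ k * g u) z‖
      ≤ 2 * (k * (A * B) + A * B) + 2 * π * |z.re ^ k * g z.re| + ∫ u, |u ^ k * g u| :=
        norm_cauchyTransform_le hz (fun u => (hasDerivAt_pow k u).mul (hderiv u))
          (integrable_pow_mul_of_abs_le_exp hgcont hc hg k) hslope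
    _ ≤ 2 * (k * (A * B) + A * B) + 2 * π * (A * B) + I * B := by
        gcongr
        · exact hval _ _ (hg _)
        · exact hint g B hg
    _ = _ := by ring

theorem integral_pow_mul_iteratedDeriv_eq_zero {φ : ℝ → ℝ} {n : ℕ} (hφ : ContDiff ℝ n φ)
    (hint : ∀ m ≤ n, ∀ k : ℕ, Integrable fun u => u ^ k * iteratedDeriv m φ u)
    {k : ℕ} (hk : k < n) : ∫ u, u ^ k * iteratedDeriv n φ u = 0 := by
  induction n generalizing k with
  | zero => exact absurd hk k.not_lt_zero
  | succ n ih =>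
    have hderiv (u : ℝ) : HasDerivAt (fun u => u ^ k * iteratedDeriv n φ u)
        (k * (u ^ (k - 1) * iteratedDeriv n φ u) + u ^ k * iteratedDeriv (n + 1) φ u) u := by
      rw [← mul_assoc, iteratedDeriv_succ]
      exact (hasDerivAt_pow k u).mul
        ((hφ.differentiable_iteratedDeriv n (mod_cast n.lt_succ_self)) u).hasDerivAt
    have hlower : ∫ u, k * (u ^ (k - 1) * iteratedDeriv n φ u) = 0 := by
      rw [integral_const_mul]
      rcases k.eq_zero_or_pos with rfl | hk₀
      · rw [Nat.cast_zero, zero_mul]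
      · rw [ih (hφ.of_le (mod_cast n.le_succ)) (fun m hm => hint m (hm.trans n.le_succ)) (by omega),
          mul_zero]
    have hsum := integral_eq_zero_of_hasDerivAt_of_integrable hderiv
      (((hint n n.le_succ (k - 1)).const_mul _).add (hint (n + 1) le_rfl k))
      (hint n n.le_succ k)
    rwa [integral_add ((hint n n.le_succ (k - 1)).const_mul _) (hint (n + 1) le_rfl k), hlower,
      zero_add] at hsum

theorem exists_norm_cauchyTransform_iteratedDeriv_le (n : ℕ) {c : ℝ} (hc : 0 < c) :
    ∃ K > 0, ∀ (φ : ℝ → ℝ) (B : ℝ) (z : ℂ), z.im ≠ 0 → ContDiff ℝ (n + 1) φ →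
      (∀ m ≤ n + 1, ∀ u, |iteratedDeriv m φ u| ≤ B * Real.exp (-c * u ^ 2)) →
      (1 + ‖z‖ ^ (n + 1)) * ‖cauchyTransform (iteratedDeriv n φ) z‖ ≤ K * B := by
  obtain ⟨K₀, hK₀, hzero⟩ := exists_norm_cauchyTransform_pow_mul_le 0 hc
  obtain ⟨K₁, hK₁, hlast⟩ := exists_norm_cauchyTransform_pow_mul_le (n + 1) hc
  obtain ⟨I, hI, hmass⟩ := exists_integral_abs_pow_mul_le n hc
  refine ⟨K₀ + (I + K₁), by positivity, fun φ B z hz hφ hb => ?_⟩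
  have hint (m : ℕ) (hm : m ≤ n + 1) (k : ℕ) : Integrable fun u => u ^ k * iteratedDeriv m φ u :=
    integrable_pow_mul_of_abs_le_exp (hφ.continuous_iteratedDeriv m (mod_cast hm)) hc (hb m hm) k
  have hderiv (u : ℝ) : HasDerivAt (iteratedDeriv n φ) (iteratedDeriv (n + 1) φ u) u := by
    rw [iteratedDeriv_succ]
    exact (hφ.differentiable_iteratedDeriv n (mod_cast n.lt_succ_self) u).hasDerivAt
  have hmoment (k : ℕ) (hk : k < n) : ∫ u, u ^ k * iteratedDeriv n φ u = 0 :=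
    integral_pow_mul_iteratedDeriv_eq_zero (hφ.of_le (mod_cast n.le_succ))
      (fun m hm => hint m (hm.trans n.le_succ)) hk
  have hexpand : z ^ (n + 1) * cauchyTransform (iteratedDeriv n φ) z =
      (∫ u, u ^ n * iteratedDeriv n φ u : ℝ) +
        cauchyTransform (fun u => u ^ (n + 1) * iteratedDeriv n φ u) z := by
    rw [pow_succ', mul_assoc, pow_mul_cauchyTransform hz (hint n n.le_succ) hmoment,
      mul_cauchyTransform hz (hint n n.le_succ n)
        (by simpa only [pow_succ', mul_assoc] using hint n n.le_succ (n + 1))]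
    simp only [pow_succ', mul_assoc]
  have hsmall : ‖cauchyTransform (iteratedDeriv n φ) z‖ ≤ K₀ * B := by
    simpa using hzero _ _ B z hz hderiv (hb n n.le_succ) (hb (n + 1) le_rfl)
  have hlarge : ‖z ^ (n + 1) * cauchyTransform (iteratedDeriv n φ) z‖ ≤ I * B + K₁ * B := by
    rw [hexpand]
    refine (norm_add_le _ _).trans (add_le_add ?_
      (hlast _ _ B z hz hderiv (hb n n.le_succ) (hb (n + 1) le_rfl)))
    rw [Complex.norm_real]
    exact (norm_integral_le_integral_norm _).trans (hmass _ B (hb n n.le_succ))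
  rw [norm_mul, norm_pow] at hlarge
  linarith

theorem exists_norm_cauchyTransform_iteratedDeriv_le_of_scale (n : ℕ) {c : ℝ} (hc : 0 < c) :
    ∃ K > 0, ∀ (φ : ℝ → ℝ) (B τ : ℝ) (z : ℂ), 0 < τ → z.im ≠ 0 → ContDiff ℝ (n + 1) φ →
      (∀ m ≤ n + 1, ∀ u, τ ^ m * |iteratedDeriv m φ u| ≤ B * Real.exp (-c * (u / τ) ^ 2)) →
      (τ ^ (n + 1) + ‖z‖ ^ (n + 1)) * ‖cauchyTransform (iteratedDeriv n φ) z‖ ≤ K * B * τ := by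
  obtain ⟨K, hK, hunit⟩ := exists_norm_cauchyTransform_iteratedDeriv_le n hc
  refine ⟨K, hK, fun φ B τ z hτ hz hφ hb => ?_⟩
  have hdilate (m : ℕ) (hm : m ≤ n + 1) :
      iteratedDeriv m (fun v => φ (τ * v)) = fun v => τ ^ m * iteratedDeriv m φ (τ * v) :=
    iteratedDeriv_comp_const_mul (hφ.of_le (mod_cast hm)) τ
  have him : (z / τ).im ≠ 0 := by
    rw [Complex.div_ofReal_im]
    exact div_ne_zero hz hτ.ne'
  have hscaled := hunit (fun v => φ (τ * v)) B (z / τ) him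
    (hφ.comp (contDiff_const.mul contDiff_id)) fun m hm v => by
      have hv := hb m hm (τ * v)
      rwa [mul_div_cancel_left₀ v hτ.ne', ← abs_of_pos (pow_pos hτ m), ← abs_mul,
        ← congrFun (hdilate m hm) v] at hv
  rw [hdilate n n.le_succ, cauchyTransform_const_mul,
    cauchyTransform_comp_mul (g := iteratedDeriv n φ) hτ, norm_mul, norm_div, Complex.norm_real,
    Complex.norm_real, Real.norm_of_nonneg hτ.le, Real.norm_of_nonneg (pow_pos hτ n).le] at hscaled
  calc (τ ^ (n + 1) + ‖z‖ ^ (n + 1)) * ‖cauchyTransform (iteratedDeriv n φ) z‖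
      = (1 + (‖z‖ / τ) ^ (n + 1)) * (τ ^ n * ‖cauchyTransform (iteratedDeriv n φ) z‖) * τ := by
        rw [div_pow]
        field_simp
        ring
    _ ≤ K * B * τ := by gcongr

end GaussianDecay

section CauchyPotential

/-- The Cauchy transform of the slice `N(·, x₂, t)` at the point `x₁ + i y₂`. -/
noncomputable def cauchyPotential (N : ℝ × ℝ × ℝ → ℝ) (x₁ x₂ y₂ t : ℝ) : ℂ :=
  cauchyTransform (fun u => N (u, x₂, t)) (x₁ + y₂ * Complex.I)

theorem im_add_mul_I_ne_zero (x : ℝ) {y : ℝ} (hy : y ≠ 0) : (x + y * Complex.I : ℂ).im ≠ 0 := by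
  simpa using hy

namespace IsGaussianKernel

variable {r : ℝ} {N : ℝ × ℝ × ℝ → ℝ} {y₂ t : ℝ}

theorem hasDerivAt_cauchyTransform_slice (h : IsGaussianKernel r N) {z : ℂ} (hz : z.im ≠ 0)
    (ht : 0 < t) (x₂ : ℝ) :
    HasDerivAt (cauchyTransform fun u => N (u, x₂, t))
      (cauchyTransform (fun u => iteratedLineDeriv axis [0] N (u, x₂, t)) z) z :=
  hasDerivAt_cauchyTransform hz (fun u => h.hasDerivAt_fst ht u x₂) (h.integrable_slice ht x₂)
    ((h.iterated_lineDeriv [0]).integrable_slice ht x₂)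

theorem hasDerivAt_cauchyPotential_fst (h : IsGaussianKernel r N) (hy : y₂ ≠ 0) (ht : 0 < t)
    (x₁ x₂ : ℝ) :
    HasDerivAt (fun x => cauchyPotential N x x₂ y₂ t)
      (cauchyPotential (iteratedLineDeriv axis [0] N) x₁ x₂ y₂ t) x₁ := by
  have hz : HasDerivAt (fun x : ℝ => (x + y₂ * Complex.I : ℂ)) 1 x₁ :=
    Complex.ofRealCLM.hasDerivAt.add_const _
  simpa [cauchyPotential, Function.comp_def] using
    (h.hasDerivAt_cauchyTransform_slice (im_add_mul_I_ne_zero x₁ hy) ht x₂).comp x₁ hz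

theorem hasDerivAt_cauchyPotential_boundary (h : IsGaussianKernel r N) (hy : y₂ ≠ 0) (ht : 0 < t)
    (x₁ x₂ : ℝ) :
    HasDerivAt (fun y => cauchyPotential N x₁ x₂ y t)
      (cauchyPotential (iteratedLineDeriv axis [0] N) x₁ x₂ y₂ t * Complex.I) y₂ := by
  have hz : HasDerivAt (fun y : ℝ => (x₁ + y * Complex.I : ℂ)) Complex.I y₂ := by
    simpa using (Complex.ofRealCLM.hasDerivAt.mul_const Complex.I).const_add (x₁ : ℂ)
  exact (h.hasDerivAt_cauchyTransform_slice (im_add_mul_I_ne_zero x₁ hy) ht x₂).comp y₂ hz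

theorem hasDerivAt_cauchyPotential_snd (h : IsGaussianKernel r N) (hy : y₂ ≠ 0) (ht : 0 < t)
    (x₁ x₂ : ℝ) :
    HasDerivAt (fun x => cauchyPotential N x₁ x y₂ t)
      (cauchyPotential (iteratedLineDeriv axis [1] N) x₁ x₂ y₂ t) x₂ := by
  have h' := h.iterated_lineDeriv [1]
  obtain ⟨K, c, hc, hK⟩ := h'.exists_eventually_abs_le ht
  exact hasDerivAt_cauchyTransform_param (im_add_mul_I_ne_zero x₁ hy)
    (f' := fun x u => iteratedLineDeriv axis [1] N (u, x, t))
    (.of_forall fun x => h.integrable_slice ht x) (h'.integrable_slice ht x₂).aestronglyMeasurable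
    (.of_forall fun x u => hK.self_of_nhds u x) ((integrable_exp_neg_mul_sq hc).const_mul K)
    (.of_forall fun x u => h.hasDerivAt_snd ht u x)

theorem hasDerivAt_cauchyPotential_time (h : IsGaussianKernel r N) (hy : y₂ ≠ 0) (ht : 0 < t)
    (x₁ x₂ : ℝ) :
    HasDerivAt (fun s => cauchyPotential N x₁ x₂ y₂ s)
      (cauchyPotential (iteratedLineDeriv axis [2] N) x₁ x₂ y₂ t) t := by
  have h' := h.iterated_lineDeriv [2]
  obtain ⟨K, c, hc, hK⟩ := h'.exists_eventually_abs_le ht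
  have hpos : ∀ᶠ s in 𝓝 t, 0 < s := lt_mem_nhds ht
  exact hasDerivAt_cauchyTransform_param (im_add_mul_I_ne_zero x₁ hy)
    (f' := fun s u => iteratedLineDeriv axis [2] N (u, x₂, s))
    (hpos.mono fun s hs => h.integrable_slice hs x₂)
    (h'.integrable_slice ht x₂).aestronglyMeasurable
    (hK.mono fun s hs u => hs u x₂) ((integrable_exp_neg_mul_sq hc).const_mul K)
    (hpos.mono fun s hs u => h.hasDerivAt_time hs u x₂)

end IsGaussianKernel

/-- Off `{y₂ = 0}`, the function `F(x₁, x₂, y₂, t)` is `Re (ζ • P)` for some `‖ζ‖ ≤ 1`, where `P` is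
the Cauchy potential of `∂^w N`. The constant absorbs the powers of `i` which `y₂`-derivatives
produce. -/
def IsCauchyDerivative (N : ℝ × ℝ × ℝ → ℝ) (w : List (Fin 3)) (F : ℝ → ℝ → ℝ → ℝ → ℝ) : Prop :=
  ∃ ζ : ℂ, ‖ζ‖ ≤ 1 ∧ ∀ x₁ x₂ y₂ t : ℝ, y₂ ≠ 0 → 0 < t →
    F x₁ x₂ y₂ t = (ζ * cauchyPotential (iteratedLineDeriv axis w N) x₁ x₂ y₂ t).re

theorem hasDerivAt_re_const_mul (ζ : ℂ) {f : ℝ → ℂ} {f' : ℂ} {x : ℝ} (hf : HasDerivAt f f' x) :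
    HasDerivAt (fun s => (ζ * f s).re) (ζ * f').re x :=
  Complex.reCLM.hasFDerivAt.comp_hasDerivAt x (hf.const_mul ζ)

theorem dE_eq_re (i : Fin 2) (y₁ y₂ : ℝ) :
    dE i y₁ y₂ = (![1, Complex.I] i / (2 * π) * (y₁ + y₂ * Complex.I)⁻¹).re := by
  have hre : ((y₁ + y₂ * Complex.I : ℂ)⁻¹).re = y₁ / (y₁ ^ 2 + y₂ ^ 2) := by
    simp [Complex.inv_re, Complex.normSq_add_mul_I]
  have him : ((y₁ + y₂ * Complex.I : ℂ)⁻¹).im = -y₂ / (y₁ ^ 2 + y₂ ^ 2) := by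
    simp [Complex.inv_im, Complex.normSq_add_mul_I]
  have hconst : (![1, Complex.I] i / (2 * π) : ℂ) = ((2 * π)⁻¹ : ℝ) * ![1, Complex.I] i := by
    push_cast
    rw [div_eq_inv_mul]
  rw [hconst, mul_assoc, Complex.re_ofReal_mul, dE, mul_comm (2 * π), ← div_div, div_eq_inv_mul]
  fin_cases i <;> simp [Complex.mul_re, hre, him, neg_div]

theorem isCauchyDerivative_Jint {q : ℝ} {M : ℝ → ℝ → ℝ → ℝ} (hM : IsGaussianKernel q ↿M)
    (i : Fin 2) : IsCauchyDerivative ↿M [] (Jint M i) := by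
  refine ⟨![1, Complex.I] i / (2 * π), ?_, fun x₁ x₂ y₂ t hy ht => ?_⟩
  · have hunit : ‖(![1, Complex.I] i : ℂ)‖ = 1 := by fin_cases i <;> simp
    have hpi : 1 ≤ 2 * π := by linarith [Real.two_le_pi]
    rw [norm_div, hunit, norm_mul, Complex.norm_real, Complex.norm_ofNat,
      Real.norm_of_nonneg Real.pi_nonneg]
    exact div_le_one_of_le₀ hpi (by positivity)
  have hintegrand (u : ℝ) : dE i (x₁ - u) y₂ * M u x₂ t =
      (![1, Complex.I] i / (2 * π) * (M u x₂ t • ((x₁ + y₂ * Complex.I : ℂ) - u)⁻¹)).re := by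
    rw [dE_eq_re, mul_smul_comm, Complex.smul_re, smul_eq_mul, mul_comm, Complex.ofReal_sub,
      add_sub_right_comm]
  have hint : Integrable fun u => M u x₂ t • ((x₁ + y₂ * Complex.I : ℂ) - u)⁻¹ :=
    integrable_smul_inv_sub_ofReal (im_add_mul_I_ne_zero x₁ hy) (hM.integrable_slice ht x₂)
  calc Jint M i x₁ x₂ y₂ t
      = ∫ u, dE i (x₁ - u) y₂ * M u x₂ t := by
        rw [← integral_sub_left_eq_self _ volume x₁]
        simp only [sub_sub_cancel, Jint]
    _ = (![1, Complex.I] i / (2 * π) * cauchyPotential ↿M x₁ x₂ y₂ t).re := by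
        simp only [hintegrand]
        exact (integral_re (hint.const_mul _)).trans
          (congrArg Complex.re (integral_const_mul _ _))

namespace IsCauchyDerivative

variable {r : ℝ} {N : ℝ × ℝ × ℝ → ℝ} {w : List (Fin 3)} {F : ℝ → ℝ → ℝ → ℝ → ℝ}

theorem partial_fst (hF : IsCauchyDerivative N w F) (hN : IsGaussianKernel r N) :
    IsCauchyDerivative N (0 :: w) (D1₄ F) := by
  obtain ⟨ζ, hζ, heq⟩ := hF
  refine ⟨ζ, hζ, fun x₁ x₂ y₂ t hy ht => ?_⟩
  simp only [D1₄, heq _ x₂ y₂ t hy ht]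
  exact (hasDerivAt_re_const_mul ζ
    ((hN.iterated_lineDeriv w).hasDerivAt_cauchyPotential_fst hy ht x₁ x₂)).deriv

theorem partial_snd (hF : IsCauchyDerivative N w F) (hN : IsGaussianKernel r N) :
    IsCauchyDerivative N (1 :: w) (D2₄ F) := by
  obtain ⟨ζ, hζ, heq⟩ := hF
  refine ⟨ζ, hζ, fun x₁ x₂ y₂ t hy ht => ?_⟩
  simp only [D2₄, heq x₁ _ y₂ t hy ht]
  exact (hasDerivAt_re_const_mul ζ
    ((hN.iterated_lineDeriv w).hasDerivAt_cauchyPotential_snd hy ht x₁ x₂)).deriv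

theorem partial_boundary (hF : IsCauchyDerivative N w F) (hN : IsGaussianKernel r N) :
    IsCauchyDerivative N (0 :: w) (D3₄ F) := by
  obtain ⟨ζ, hζ, heq⟩ := hF
  refine ⟨ζ * Complex.I, by simpa using hζ, fun x₁ x₂ y₂ t hy ht => ?_⟩
  have hev : (fun y => F x₁ x₂ y t) =ᶠ[𝓝 y₂] fun y =>
      (ζ * cauchyPotential (iteratedLineDeriv axis w N) x₁ x₂ y t).re :=
    (eventually_ne_nhds hy).mono fun y hy => heq x₁ x₂ y t hy ht
  rw [mul_assoc, mul_comm Complex.I]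
  exact hev.deriv_eq.trans (hasDerivAt_re_const_mul ζ
    ((hN.iterated_lineDeriv w).hasDerivAt_cauchyPotential_boundary hy ht x₁ x₂)).deriv

theorem partial_time (hF : IsCauchyDerivative N w F) (hN : IsGaussianKernel r N) :
    IsCauchyDerivative N (2 :: w) (D4₄ F) := by
  obtain ⟨ζ, hζ, heq⟩ := hF
  refine ⟨ζ, hζ, fun x₁ x₂ y₂ t hy ht => ?_⟩
  have hev : (fun s => F x₁ x₂ y₂ s) =ᶠ[𝓝 t] fun s =>
      (ζ * cauchyPotential (iteratedLineDeriv axis w N) x₁ x₂ y₂ s).re :=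
    (lt_mem_nhds ht).mono fun s hs => heq x₁ x₂ y₂ s hy hs
  exact hev.deriv_eq.trans (hasDerivAt_re_const_mul ζ
    ((hN.iterated_lineDeriv w).hasDerivAt_cauchyPotential_time hy ht x₁ x₂)).deriv

theorem iterate {j : Fin 3} {A : (ℝ → ℝ → ℝ → ℝ → ℝ) → ℝ → ℝ → ℝ → ℝ → ℝ}
    (hA : ∀ {w F}, IsCauchyDerivative N w F → IsCauchyDerivative N (j :: w) (A F))
    (hF : IsCauchyDerivative N w F) (n : ℕ) :
    IsCauchyDerivative N (List.replicate n j ++ w) (A^[n] F) := by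
  induction n with
  | zero => exact hF
  | succ n ih => rw [Function.iterate_succ_apply']; exact hA ih

theorem iterate_partials (hF : IsCauchyDerivative N [] F) (hN : IsGaussianKernel r N)
    (k₁ k₂ l s : ℕ) :
    IsCauchyDerivative N
      (List.replicate k₁ 0 ++ (List.replicate k₂ 1 ++ (List.replicate l 0 ++ List.replicate s 2)))
      (D1₄^[k₁] (D2₄^[k₂] (D3₄^[l] (D4₄^[s] F)))) := by
  have ht := iterate (fun h => h.partial_time hN) hF s
  rw [List.append_nil] at ht
  exact iterate (fun h => h.partial_fst hN) (iterate (fun h => h.partial_snd hN)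
    (iterate (fun h => h.partial_boundary hN) ht l) k₂) k₁

theorem abs_le (hF : IsCauchyDerivative N w F) (hN : IsGaussianKernel r N) {w' : List (Fin 3)}
    (hw : w.Perm w') {y₂ t : ℝ} (hy : y₂ ≠ 0) (ht : 0 < t) (x₁ x₂ : ℝ) :
    |F x₁ x₂ y₂ t| ≤ ‖cauchyPotential (iteratedLineDeriv axis w' N) x₁ x₂ y₂ t‖ := by
  obtain ⟨ζ, hζ, heq⟩ := hF
  have hslice : (fun u => iteratedLineDeriv axis w N (u, x₂, t)) =
      fun u => iteratedLineDeriv axis w' N (u, x₂, t) :=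
    funext fun u => iteratedLineDeriv_eqOn_of_perm isOpen_snd_snd_pos hN.contDiffOn hw ht
  rw [heq x₁ x₂ y₂ t hy ht, cauchyPotential, hslice]
  refine (Complex.abs_re_le_norm _).trans ?_
  rw [norm_mul]
  exact mul_le_of_le_one_left (norm_nonneg _) hζ

end IsCauchyDerivative

end CauchyPotential

section PotentialEstimate

theorem sqrt_weight_le (x₁ x₂ y₂ : ℝ) {τ : ℝ} (hτ : 0 < τ) :
    √(x₁ ^ 2 + (|x₂| + |y₂|) ^ 2 + τ ^ 2) ≤
      (τ + ‖(x₁ + y₂ * Complex.I : ℂ)‖) * (1 + |x₂ / τ|) := by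
  set ρ := ‖(x₁ + y₂ * Complex.I : ℂ)‖ with hρ
  have hρ_sq : ρ ^ 2 = x₁ ^ 2 + y₂ ^ 2 := by
    rw [hρ, Complex.sq_norm, Complex.normSq_add_mul_I]
  have hy : |y₂| ≤ ρ := abs_le_of_sq_le_sq (by nlinarith [sq_nonneg x₁]) (norm_nonneg _)
  have hx : |x₂| = τ * |x₂ / τ| := by rw [abs_div, abs_of_pos hτ, mul_div_cancel₀ _ hτ.ne']
  have hρ₀ : 0 ≤ ρ := norm_nonneg _
  calc √(x₁ ^ 2 + (|x₂| + |y₂|) ^ 2 + τ ^ 2) ≤ τ + ρ + |x₂| := by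
        refine Real.sqrt_le_iff.2 ⟨by positivity, ?_⟩
        nlinarith [mul_le_mul_of_nonneg_left hy (abs_nonneg x₂), sq_abs y₂,
          mul_nonneg hτ.le hρ₀, mul_nonneg hτ.le (abs_nonneg x₂)]
    _ ≤ τ + ρ + (τ + ρ) * |x₂ / τ| := by
        rw [hx]
        gcongr
        exact le_add_of_nonneg_right hρ₀
    _ = (τ + ρ) * (1 + |x₂ / τ|) := by ring

theorem sqrt_weight_pow_le (n : ℕ) (x₁ x₂ y₂ : ℝ) {τ : ℝ} (hτ : 0 < τ) :
    √(x₁ ^ 2 + (|x₂| + |y₂|) ^ 2 + τ ^ 2) ^ (n + 1) ≤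
      2 ^ n * (τ ^ (n + 1) + ‖(x₁ + y₂ * Complex.I : ℂ)‖ ^ (n + 1)) * (1 + |x₂ / τ|) ^ (n + 1) := by
  calc _ ≤ ((τ + ‖(x₁ + y₂ * Complex.I : ℂ)‖) * (1 + |x₂ / τ|)) ^ (n + 1) := by
        gcongr
        exact sqrt_weight_le x₁ x₂ y₂ hτ
    _ ≤ _ := by
        rw [mul_pow]
        gcongr
        exact add_pow_le hτ.le (norm_nonneg _) (n + 1)

theorem sqrt_pow_mul_le_of_abs_le {C c r t u x y : ℝ} {m : ℕ} (ht : 0 < t)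
    (h : |y| ≤ C * t ^ ((r - m) / 2) * Real.exp (-c * (u ^ 2 + x ^ 2) / t)) :
    √t ^ m * |y| ≤
      C * t ^ (r / 2) * Real.exp (-c * (x / √t) ^ 2) * Real.exp (-c * (u / √t) ^ 2) := by
  have hpow : √t ^ m * t ^ ((r - m) / 2) = t ^ (r / 2) := by
    rw [Real.sqrt_eq_rpow, ← Real.rpow_mul_natCast ht.le, ← Real.rpow_add ht]
    ring_nf
  calc √t ^ m * |y| ≤ √t ^ m * (C * t ^ ((r - m) / 2) * Real.exp (-c * (u ^ 2 + x ^ 2) / t)) := by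
        gcongr
    _ = C * t ^ (r / 2) * Real.exp (-c * (u ^ 2 + x ^ 2) / t) := by rw [← hpow]; ring
    _ = _ := by
        rw [mul_assoc (C * _), ← Real.exp_add, div_pow, div_pow, Real.sq_sqrt ht.le]
        ring_nf

namespace IsGaussianKernel

variable {r : ℝ} {N : ℝ × ℝ × ℝ → ℝ}

theorem exists_sqrt_pow_add_norm_pow_mul_norm_cauchyPotential_le (h : IsGaussianKernel r N)
    (n : ℕ) :
    ∃ C > 0, ∃ c > 0, ∀ x₁ x₂ y₂ t : ℝ, y₂ ≠ 0 → 0 < t →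
      (√t ^ (n + 1) + ‖(x₁ + y₂ * Complex.I : ℂ)‖ ^ (n + 1)) *
          ‖cauchyPotential (iteratedLineDeriv axis (List.replicate n 0) N) x₁ x₂ y₂ t‖ ≤
        C * t ^ ((r + 1) / 2) * Real.exp (-c * (x₂ / √t) ^ 2) := by
  obtain ⟨C, hC, c, hc, hb⟩ := h.exists_bound_iteratedDeriv (n + 1)
  obtain ⟨K, hK, hdecay⟩ := exists_norm_cauchyTransform_iteratedDeriv_le_of_scale n hc
  refine ⟨K * C, by positivity, c, hc, fun x₁ x₂ y₂ t hy ht => ?_⟩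
  have hpow : t ^ (r / 2) * √t = t ^ ((r + 1) / 2) := by
    rw [Real.sqrt_eq_rpow, ← Real.rpow_add ht]
    ring_nf
  rw [cauchyPotential, iteratedLineDeriv_axis_replicate_zero]
  calc _ ≤ K * (C * t ^ (r / 2) * Real.exp (-c * (x₂ / √t) ^ 2)) * √t :=
        hdecay _ _ _ _ (Real.sqrt_pos.2 ht) (im_add_mul_I_ne_zero x₁ hy)
          ((h.contDiff_slice ht x₂).of_le (mod_cast le_top))
          fun m hm u => sqrt_pow_mul_le_of_abs_le ht (hb m hm u x₂ t ht)
    _ = K * C * t ^ ((r + 1) / 2) * Real.exp (-c * (x₂ / √t) ^ 2) := by rw [← hpow]; ring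

theorem exists_norm_cauchyPotential_le (h : IsGaussianKernel r N) (n : ℕ) :
    ∃ C > 0, ∃ c > 0, ∀ x₁ x₂ y₂ t : ℝ, y₂ ≠ 0 → 0 < t →
      ‖cauchyPotential (iteratedLineDeriv axis (List.replicate n 0) N) x₁ x₂ y₂ t‖ ≤
        C * t ^ ((r + 1) / 2) * (x₁ ^ 2 + (|x₂| + |y₂|) ^ 2 + t) ^ (-(((n : ℝ) + 1) / 2)) *
          Real.exp (-c * x₂ ^ 2 / t) := by
  obtain ⟨K, hK, c, hc, hdecay⟩ := h.exists_sqrt_pow_add_norm_pow_mul_norm_cauchyPotential_le n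
  obtain ⟨A, hA, habsorb⟩ := exists_one_add_abs_pow_mul_exp_le (n + 1) hc
  refine ⟨2 ^ n * K * A, by positivity, c / 2, half_pos hc, fun x₁ x₂ y₂ t hy ht => ?_⟩
  set P := ‖cauchyPotential (iteratedLineDeriv axis (List.replicate n 0) N) x₁ x₂ y₂ t‖
  set ρ := ‖(x₁ + y₂ * Complex.I : ℂ)‖
  set W := x₁ ^ 2 + (|x₂| + |y₂|) ^ 2 + t
  have hW : 0 < W := by positivity
  have hweight : √W ^ (n + 1) ≤
      2 ^ n * (√t ^ (n + 1) + ρ ^ (n + 1)) * (1 + |x₂ / √t|) ^ (n + 1) := by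
    simpa only [Real.sq_sqrt ht.le] using sqrt_weight_pow_le n x₁ x₂ y₂ (Real.sqrt_pos.2 ht)
  have hrpow : W ^ (-(((n : ℝ) + 1) / 2)) = (√W ^ (n + 1))⁻¹ := by
    rw [Real.rpow_neg hW.le, Real.sqrt_eq_rpow, ← Real.rpow_mul_natCast hW.le]
    push_cast
    ring_nf
  have hexp : -(c / 2) * (x₂ / √t) ^ 2 = -(c / 2) * x₂ ^ 2 / t := by
    rw [div_pow, Real.sq_sqrt ht.le, mul_div_assoc]
  rw [hrpow, mul_right_comm, ← div_eq_mul_inv, le_div_iff₀ (by positivity), mul_comm P]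
  calc √W ^ (n + 1) * P
      ≤ 2 ^ n * (√t ^ (n + 1) + ρ ^ (n + 1)) * (1 + |x₂ / √t|) ^ (n + 1) * P := by gcongr
    _ = 2 ^ n * (1 + |x₂ / √t|) ^ (n + 1) * ((√t ^ (n + 1) + ρ ^ (n + 1)) * P) := by ring
    _ ≤ 2 ^ n * (1 + |x₂ / √t|) ^ (n + 1) *
          (K * t ^ ((r + 1) / 2) * Real.exp (-c * (x₂ / √t) ^ 2)) :=
        mul_le_mul_of_nonneg_left (hdecay x₁ x₂ y₂ t hy ht) (by positivity)
    _ = 2 ^ n * K * t ^ ((r + 1) / 2) *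
          ((1 + |x₂ / √t|) ^ (n + 1) * Real.exp (-c * (x₂ / √t) ^ 2)) := by ring
    _ ≤ 2 ^ n * K * t ^ ((r + 1) / 2) * (A * Real.exp (-(c / 2) * (x₂ / √t) ^ 2)) :=
        mul_le_mul_of_nonneg_left (habsorb _) (by positivity)
    _ = 2 ^ n * K * A * t ^ ((r + 1) / 2) * Real.exp (-(c / 2) * x₂ ^ 2 / t) := by
        rw [hexp]; ring

end IsGaussianKernel

end PotentialEstimate

theorem stmt14_general (q : ℝ) (M : ℝ → ℝ → ℝ → ℝ)
    (hsmooth : ContDiffOn ℝ (⊤ : ℕ∞) (fun p : ℝ × ℝ × ℝ => M p.1 p.2.1 p.2.2)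
      {p : ℝ × ℝ × ℝ | 0 < p.2.2})
    (hbound : ∀ k₁ k₂ s : ℕ, ∃ C > (0 : ℝ), ∃ c > (0 : ℝ), ∀ (x₁ x₂ : ℝ), ∀ t > (0 : ℝ),
      |(D1₃^[k₁] (D2₃^[k₂] (D3₃^[s] M))) x₁ x₂ t|
        ≤ C * t ^ ((q - (k₁ : ℝ) - (k₂ : ℝ) - 2 * (s : ℝ)) / 2)
            * Real.exp (-c * (x₁ ^ 2 + x₂ ^ 2) / t))
    (i : Fin 2) (k₁ k₂ l s : ℕ) :
    ∃ C > (0 : ℝ), ∃ c > (0 : ℝ), ∀ x₁ x₂ y₂ t : ℝ, y₂ ≠ 0 → 0 < t →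
      |(D1₄^[k₁] (D2₄^[k₂] (D3₄^[l] (D4₄^[s] (Jint M i))))) x₁ x₂ y₂ t|
        ≤ C * t ^ ((q + 1 - 2 * (s : ℝ) - (k₂ : ℝ)) / 2)
            * (x₁ ^ 2 + (|x₂| + |y₂|) ^ 2 + t) ^ (-(((k₁ : ℝ) + (l : ℝ) + 1) / 2))
            * Real.exp (-c * x₂ ^ 2 / t) := by
  have hM : IsGaussianKernel q ↿M := isGaussianKernel_of_ordered_bounds hsmooth hbound
  have hJ := (isCauchyDerivative_Jint hM i).iterate_partials hM k₁ k₂ l s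
  set v : List (Fin 3) := List.replicate k₂ 1 ++ List.replicate s 2 with hv
  obtain ⟨C, hC, c, hc, hP⟩ := (hM.iterated_lineDeriv v).exists_norm_cauchyPotential_le (k₁ + l)
  have hperm : List.Perm
      (List.replicate k₁ 0 ++ (List.replicate k₂ 1 ++ (List.replicate l 0 ++ List.replicate s 2)))
      (List.replicate (k₁ + l) 0 ++ v) := by
    rw [List.replicate_add, List.append_assoc, hv]
    exact (List.perm_append_comm_assoc _ _ _).append_left _
  have hdegree : q - (parabolicOrder v : ℝ) + 1 = q + 1 - 2 * s - k₂ := by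
    have horder : parabolicOrder v = k₂ + s * 2 := by
      simp [hv, parabolicOrder_append, parabolicOrder_replicate]
    rw [horder]
    push_cast
    ring
  refine ⟨C, hC, c, hc, fun x₁ x₂ y₂ t hy ht => (hJ.abs_le hM hperm hy ht x₁ x₂).trans ?_⟩
  simpa only [iteratedLineDeriv_append, hdegree, Nat.cast_add] using hP x₁ x₂ y₂ t hy ht

/-- Pointwise derivative bounds for the half-space kernel
`J_i(x,y₂,t) = ∫_ℝ ∂_iE(y₁,y₂) M(x₁−y₁,x₂,t) dy₁` when `M` is smooth, parabolically
homogeneous of degree `q`, and has Gaussian derivative bounds (Solonnikov-type scaling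
lemma, two-dimensional case). -/
theorem stmt14 (q : ℝ) (M : ℝ → ℝ → ℝ → ℝ)
    (hsmooth : ContDiffOn ℝ (⊤ : ℕ∞) (fun p : ℝ × ℝ × ℝ => M p.1 p.2.1 p.2.2)
      {p : ℝ × ℝ × ℝ | 0 < p.2.2})
    (hhom : ∀ lam > (0 : ℝ), ∀ (x₁ x₂ : ℝ), ∀ t > (0 : ℝ),
      M (lam * x₁) (lam * x₂) (lam ^ 2 * t) = lam ^ q * M x₁ x₂ t)
    (hbound : ∀ k₁ k₂ s : ℕ, ∃ C > (0 : ℝ), ∃ c > (0 : ℝ), ∀ (x₁ x₂ : ℝ), ∀ t > (0 : ℝ),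
      |(D1₃^[k₁] (D2₃^[k₂] (D3₃^[s] M))) x₁ x₂ t|
        ≤ C * t ^ ((q - (k₁ : ℝ) - (k₂ : ℝ) - 2 * (s : ℝ)) / 2)
            * Real.exp (-c * (x₁ ^ 2 + x₂ ^ 2) / t))
    (i : Fin 2) :
    ∀ k₁ k₂ l s : ℕ, ∃ C > (0 : ℝ), ∃ c > (0 : ℝ),
      ∀ x₁ : ℝ, ∀ x₂ > (0 : ℝ), ∀ y₂ > (0 : ℝ), ∀ t > (0 : ℝ),
        |(D1₄^[k₁] (D2₄^[k₂] (D3₄^[l] (D4₄^[s] (Jint M i))))) x₁ x₂ y₂ t|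
          ≤ C * t ^ ((q + 1 - 2 * (s : ℝ) - (k₂ : ℝ)) / 2)
              * (x₁ ^ 2 + (x₂ + y₂) ^ 2 + t) ^ (-(((k₁ : ℝ) + (l : ℝ) + 1) / 2))
              * Real.exp (-c * x₂ ^ 2 / t) := by
  intro k₁ k₂ l s
  obtain ⟨C, hC, c, hc, h⟩ := stmt14_general q M hsmooth hbound i k₁ k₂ l s
  exact ⟨C, hC, c, hc, fun x₁ x₂ hx₂ y₂ hy₂ t ht => by
    simpa only [abs_of_pos hx₂, abs_of_pos hy₂] using h x₁ x₂ y₂ t hy₂.ne' ht⟩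
end

section
/- Let E(z) = (1/(2π)) log|z| and, for x, y in the open upper half-plane ℝ²₊, let N(x,y) = E(x−y) + E(x−y*) with y* = (y₁,−y₂). Let F = (F₁,F₂) : ℝ²₊ → ℝ² be smooth with compact support contained in ℝ²₊, and define the Helmholtz projection ℚF(x) = F(x) + ∇_x ∫_{ℝ²₊} ∇_y N(x,y) · F(y) dy for x ∈ ℝ²₊. Then ℚF is divergence-free on ℝ²₊: ∇·(ℚF)(x) = 0 for all x ∈ ℝ²₊; moreover its second component extends continuously to the boundary with (ℚF)₂(x₁, 0) = 0 for all x₁ ∈ ℝ. -/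
open MeasureTheory

/-- The fundamental solution of the Laplacian on `ℝ²`: `E(z) = (1/2π) log|z|`. -/
noncomputable def Efun (p : ℝ × ℝ) : ℝ :=
  Real.log (Real.sqrt (p.1 ^ 2 + p.2 ^ 2)) / (2 * Real.pi)

/-- The Green function of the Neumann problem for the Laplacian in the upper
half-plane: `N(x,y) = E(x−y) + E(x−y*)`, `y* = (y₁,−y₂)`. -/
noncomputable def Nfun (x y : ℝ × ℝ) : ℝ :=
  Efun (x.1 - y.1, x.2 - y.2) + Efun (x.1 - y.1, x.2 + y.2)

/-- The scalar potential `x ↦ ∫_{ℝ²₊} ∇_y N(x,y)·F(y) dy`. -/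
noncomputable def pot (F : ℝ × ℝ → ℝ × ℝ) (x : ℝ × ℝ) : ℝ :=
  ∫ y in {p : ℝ × ℝ | 0 < p.2},
    (deriv (fun a => Nfun x (a, y.2)) y.1) * (F y).1
      + (deriv (fun b => Nfun x (y.1, b)) y.2) * (F y).2

/-- First component of the Helmholtz projection `ℚF = F + ∇ ∫ ∇_y N(·,y)·F(y) dy`. -/
noncomputable def QF1 (F : ℝ × ℝ → ℝ × ℝ) (x : ℝ × ℝ) : ℝ :=
  (F x).1 + deriv (fun a => pot F (a, x.2)) x.1

/-- Second component of the Helmholtz projection. -/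
noncomputable def QF2 (F : ℝ × ℝ → ℝ × ℝ) (x : ℝ × ℝ) : ℝ :=
  (F x).2 + deriv (fun b => pot F (x.1, b)) x.2

/-!
Reflecting `F` across the boundary gives a field `H` on the whole plane (even first component, odd
second component) for which the Neumann potential is the convolution `pot F = -(∇E ⋆ H)`, with the
dot product as multiplication. Derivatives of the convolution fall on `H`, and in two dimensions
`ΔH = ∇(div H) + ∇^⊥(curl H)`. In polar coordinates one finds that `∇E ⋆ ∇f = f` (integrate along
rays) and `∇E ⋆ ∇^⊥ f = 0` (integrate along circles). Hence `Δ (pot F) = -div H`, which is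
`-div F` in the half-plane. The boundary condition holds because `pot F` is even in `x₂`.
-/

open Set Function Filter
open scoped Topology Convolution

section DirDeriv

variable {E V : Type*} [NormedAddCommGroup E] [NormedSpace ℝ E]
  [NormedAddCommGroup V] [NormedSpace ℝ V] {f : E → V}

/-- The derivative `∂_v f` in the direction `v`, as an operator on functions. Unlike `lineDeriv`,
it is read off the Fréchet derivative, so that it is linear in `v` for every `f`. -/
noncomputable def dirDeriv (v : E) (f : E → V) : E → V := fun x ↦ fderiv ℝ f x v

lemma contDiff_dirDeriv {m n : WithTop ℕ∞} (hf : ContDiff ℝ n f) (hmn : m + 1 ≤ n) (v : E) :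
    ContDiff ℝ m (dirDeriv v f) :=
  (hf.fderiv_right hmn).clm_apply contDiff_const

lemma hasCompactSupport_dirDeriv (hf : HasCompactSupport f) (v : E) :
    HasCompactSupport (dirDeriv v f) :=
  hf.fderiv_apply ℝ v

lemma dirDeriv_neg (v : E) (f : E → V) : dirDeriv v (-f) = -dirDeriv v f := by
  ext x
  simp [dirDeriv, fderiv_neg]

lemma dirDeriv_comm (hf : ContDiff ℝ 2 f) (v w : E) :
    dirDeriv v (dirDeriv w f) = dirDeriv w (dirDeriv v f) := by
  have dirDeriv_dirDeriv (v w : E) (x : E) :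
      dirDeriv v (dirDeriv w f) x = fderiv ℝ (fderiv ℝ f) x v w := by
    have hd : DifferentiableAt ℝ (fderiv ℝ f) x :=
      (hf.fderiv_right (m := 1) one_add_one_eq_two.le).differentiable one_ne_zero x
    change fderiv ℝ (fun y ↦ fderiv ℝ f y w) x v = _
    simp [fderiv_clm_apply hd (differentiableAt_const w)]
  ext x
  rw [dirDeriv_dirDeriv, dirDeriv_dirDeriv]
  exact hf.contDiffAt.isSymmSndFDerivAt (by simp) v w

lemma fderiv_comp_const_sub_apply (hf : Differentiable ℝ f) (a x v : E) :
    fderiv ℝ (fun y ↦ f (a - y)) x v = -fderiv ℝ f (a - x) v := by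
  have h : HasFDerivAt (fun y ↦ f (a - y)) _ x :=
    (hf (a - x)).hasFDerivAt.comp x ((hasFDerivAt_id x).const_sub a)
  simp [h.fderiv]

lemma dirDeriv_convolution_right [MeasurableSpace E] [BorelSpace E] {μ : Measure E}
    [SFinite μ] [μ.IsAddLeftInvariant]
    {W X : Type*} [NormedAddCommGroup W] [NormedSpace ℝ W]
    [NormedAddCommGroup X] [NormedSpace ℝ X] (L : W →L[ℝ] V →L[ℝ] X) {k : E → W}
    (hk : LocallyIntegrable k μ) (hf : ContDiff ℝ 1 f) (hc : HasCompactSupport f) (v : E) :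
    dirDeriv v (k ⋆[L, μ] f) = k ⋆[L, μ] dirDeriv v f := by
  ext x
  rw [dirDeriv, (hc.hasFDerivAt_convolution_right L hk hf x).fderiv]
  exact convolution_precompR_apply L hk (hc.fderiv ℝ) (hf.continuous_fderiv one_ne_zero) x v

end DirDeriv

section PlaneCalculus

variable {V : Type*} [NormedAddCommGroup V] [NormedSpace ℝ V]

lemma deriv_prodMk_left {f : ℝ × ℝ → V} {x : ℝ × ℝ} (hf : DifferentiableAt ℝ f x) :
    deriv (fun a ↦ f (a, x.2)) x.1 = dirDeriv (1, 0) f x :=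
  (hf.hasFDerivAt.comp_hasDerivAt x.1
    ((hasDerivAt_id x.1).prodMk (hasDerivAt_const x.1 x.2))).deriv

lemma deriv_prodMk_right {f : ℝ × ℝ → V} {x : ℝ × ℝ} (hf : DifferentiableAt ℝ f x) :
    deriv (fun b ↦ f (x.1, b)) x.2 = dirDeriv (0, 1) f x :=
  (hf.hasFDerivAt.comp_hasDerivAt x.2
    ((hasDerivAt_const x.2 x.1).prodMk (hasDerivAt_id x.2))).deriv

lemma fderiv_apply_eq_dirDeriv (f : ℝ × ℝ → V) (x v : ℝ × ℝ) :
    fderiv ℝ f x v = v.1 • dirDeriv (1, 0) f x + v.2 • dirDeriv (0, 1) f x := by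
  rw [dirDeriv, dirDeriv, ← map_smul, ← map_smul, ← map_add]
  simp

/-- The gradient `∇f = (∂₁f, ∂₂f)`. -/
noncomputable def planeGrad (f : ℝ × ℝ → ℝ) : ℝ × ℝ → ℝ × ℝ :=
  fun x ↦ (dirDeriv (1, 0) f x, dirDeriv (0, 1) f x)

/-- The rotated gradient `∇^⊥ f = (-∂₂f, ∂₁f)`. -/
noncomputable def planePerpGrad (f : ℝ × ℝ → ℝ) : ℝ × ℝ → ℝ × ℝ :=
  fun x ↦ (-dirDeriv (0, 1) f x, dirDeriv (1, 0) f x)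

/-- The divergence `∂₁H₁ + ∂₂H₂` of a plane vector field. -/
noncomputable def planeDiv (H : ℝ × ℝ → ℝ × ℝ) : ℝ × ℝ → ℝ :=
  fun x ↦ (dirDeriv (1, 0) H x).1 + (dirDeriv (0, 1) H x).2

/-- The scalar curl `∂₁H₂ - ∂₂H₁` of a plane vector field. -/
noncomputable def planeCurl (H : ℝ × ℝ → ℝ × ℝ) : ℝ × ℝ → ℝ :=
  fun x ↦ (dirDeriv (1, 0) H x).2 - (dirDeriv (0, 1) H x).1

/-- The Laplacian `∂₁∂₁f + ∂₂∂₂f`. Mathlib's `Laplacian` needs an inner product space, which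
`ℝ × ℝ` with its sup norm is not. -/
noncomputable def planeLaplacian (f : ℝ × ℝ → V) : ℝ × ℝ → V :=
  dirDeriv (1, 0) (dirDeriv (1, 0) f) + dirDeriv (0, 1) (dirDeriv (0, 1) f)

lemma planeLaplacian_neg (f : ℝ × ℝ → V) : planeLaplacian (-f) = -planeLaplacian f := by
  simp only [planeLaplacian, dirDeriv_neg, neg_add]

lemma continuous_planeGrad {f : ℝ × ℝ → ℝ} (hf : ContDiff ℝ 1 f) : Continuous (planeGrad f) :=
  (contDiff_dirDeriv hf (zero_add 1).le _).continuous.prodMk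
    (contDiff_dirDeriv hf (zero_add 1).le _).continuous

lemma continuous_planePerpGrad {f : ℝ × ℝ → ℝ} (hf : ContDiff ℝ 1 f) :
    Continuous (planePerpGrad f) :=
  (contDiff_dirDeriv hf (zero_add 1).le _).continuous.neg.prodMk
    (contDiff_dirDeriv hf (zero_add 1).le _).continuous

lemma hasCompactSupport_planeGrad {f : ℝ × ℝ → ℝ} (hf : HasCompactSupport f) :
    HasCompactSupport (planeGrad f) :=
  (hf.fderiv ℝ).comp_left (g := fun A : ℝ × ℝ →L[ℝ] ℝ ↦ (A (1, 0), A (0, 1))) (by simp)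

lemma hasCompactSupport_planePerpGrad {f : ℝ × ℝ → ℝ} (hf : HasCompactSupport f) :
    HasCompactSupport (planePerpGrad f) :=
  (hf.fderiv ℝ).comp_left (g := fun A : ℝ × ℝ →L[ℝ] ℝ ↦ (-A (0, 1), A (1, 0))) (by simp)

variable {H : ℝ × ℝ → ℝ × ℝ}

lemma contDiff_planeDiv (hH : ContDiff ℝ 2 H) : ContDiff ℝ 1 (planeDiv H) :=
  (contDiff_dirDeriv hH one_add_one_eq_two.le _).fst.add
    (contDiff_dirDeriv hH one_add_one_eq_two.le _).snd

lemma contDiff_planeCurl (hH : ContDiff ℝ 2 H) : ContDiff ℝ 1 (planeCurl H) :=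
  (contDiff_dirDeriv hH one_add_one_eq_two.le _).snd.sub
    (contDiff_dirDeriv hH one_add_one_eq_two.le _).fst

lemma hasCompactSupport_planeDiv (hH : HasCompactSupport H) : HasCompactSupport (planeDiv H) :=
  (hH.fderiv ℝ).comp_left
    (g := fun A : ℝ × ℝ →L[ℝ] ℝ × ℝ ↦ (A (1, 0)).1 + (A (0, 1)).2) (by simp)

lemma hasCompactSupport_planeCurl (hH : HasCompactSupport H) : HasCompactSupport (planeCurl H) :=
  (hH.fderiv ℝ).comp_left
    (g := fun A : ℝ × ℝ →L[ℝ] ℝ × ℝ ↦ (A (1, 0)).2 - (A (0, 1)).1) (by simp)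

lemma dirDeriv_planeDiv (hH : ContDiff ℝ 2 H) (v x : ℝ × ℝ) :
    dirDeriv v (planeDiv H) x =
      (dirDeriv v (dirDeriv (1, 0) H) x).1 + (dirDeriv v (dirDeriv (0, 1) H) x).2 := by
  have hd (w : ℝ × ℝ) : HasFDerivAt (dirDeriv w H) (fderiv ℝ (dirDeriv w H) x) x :=
    ((contDiff_dirDeriv hH one_add_one_eq_two.le w).differentiable one_ne_zero x).hasFDerivAt
  have h : HasFDerivAt (planeDiv H) _ x := (hd (1, 0)).fst.add (hd (0, 1)).snd
  rw [dirDeriv, h.fderiv]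
  rfl

lemma dirDeriv_planeCurl (hH : ContDiff ℝ 2 H) (v x : ℝ × ℝ) :
    dirDeriv v (planeCurl H) x =
      (dirDeriv v (dirDeriv (1, 0) H) x).2 - (dirDeriv v (dirDeriv (0, 1) H) x).1 := by
  have hd (w : ℝ × ℝ) : HasFDerivAt (dirDeriv w H) (fderiv ℝ (dirDeriv w H) x) x :=
    ((contDiff_dirDeriv hH one_add_one_eq_two.le w).differentiable one_ne_zero x).hasFDerivAt
  have h : HasFDerivAt (planeCurl H) _ x := (hd (1, 0)).snd.sub (hd (0, 1)).fst
  rw [dirDeriv, h.fderiv]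
  rfl

lemma planeLaplacian_eq_planeGrad_planeDiv_add_planePerpGrad_planeCurl (hH : ContDiff ℝ 2 H) :
    planeLaplacian H = planeGrad (planeDiv H) + planePerpGrad (planeCurl H) := by
  ext x <;>
    simp only [planeLaplacian, planeGrad, planePerpGrad, Pi.add_apply, Prod.fst_add, Prod.snd_add,
      dirDeriv_planeDiv hH, dirDeriv_planeCurl hH, dirDeriv_comm hH (0, 1) (1, 0)] <;>
    ring

lemma planeLaplacian_convolution_right {μ : Measure (ℝ × ℝ)} [SFinite μ] [μ.IsAddLeftInvariant]
    {W X : Type*} [NormedAddCommGroup W] [NormedSpace ℝ W]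
    [NormedAddCommGroup X] [NormedSpace ℝ X] (L : W →L[ℝ] V →L[ℝ] X) {k : ℝ × ℝ → W}
    {f : ℝ × ℝ → V} (hk : LocallyIntegrable k μ) (hf : ContDiff ℝ 2 f)
    (hc : HasCompactSupport f) :
    planeLaplacian (k ⋆[L, μ] f) = k ⋆[L, μ] planeLaplacian f := by
  have hf' (v : ℝ × ℝ) : ContDiff ℝ 1 (dirDeriv v f) :=
    contDiff_dirDeriv hf one_add_one_eq_two.le v
  have dirDeriv_dirDeriv (v : ℝ × ℝ) :
      dirDeriv v (dirDeriv v (k ⋆[L, μ] f)) = k ⋆[L, μ] dirDeriv v (dirDeriv v f) := by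
    rw [dirDeriv_convolution_right L hk (hf.of_le one_le_two) hc,
      dirDeriv_convolution_right L hk (hf' v) (hasCompactSupport_dirDeriv hc v)]
  have hex (v : ℝ × ℝ) : ConvolutionExists k (dirDeriv v (dirDeriv v f)) L μ :=
    (hasCompactSupport_dirDeriv (hasCompactSupport_dirDeriv hc v) v).convolutionExists_right L hk
      (contDiff_dirDeriv (hf' v) (zero_add 1).le v).continuous
  rw [planeLaplacian, dirDeriv_dirDeriv, dirDeriv_dirDeriv, planeLaplacian,
    (hex (1, 0)).distrib_add (hex (0, 1))]

end PlaneCalculus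

section PolarCoordinates

variable {V : Type*} [NormedAddCommGroup V] [NormedSpace ℝ V]

/-- The unit vector at angle `θ`, so that `polarCoord.symm (r, θ) = r • circleVec θ`. -/
noncomputable def circleVec (θ : ℝ) : ℝ × ℝ := (Real.cos θ, Real.sin θ)

/-- The rotation `(a, b) ↦ (-b, a)` of the plane by a quarter turn. -/
def quarterTurn : ℝ × ℝ →L[ℝ] ℝ × ℝ :=
  (-ContinuousLinearMap.snd ℝ ℝ ℝ).prod (ContinuousLinearMap.fst ℝ ℝ ℝ)

lemma polarCoord_symm_eq_smul_circleVec (p : ℝ × ℝ) :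
    polarCoord.symm p = p.1 • circleVec p.2 := rfl

lemma hasDerivAt_circleVec (θ : ℝ) : HasDerivAt circleVec (quarterTurn (circleVec θ)) θ :=
  (Real.hasDerivAt_cos θ).prodMk (Real.hasDerivAt_sin θ)

lemma continuous_circleVec : Continuous circleVec :=
  Real.continuous_cos.prodMk Real.continuous_sin

lemma smul_circleVec_fst_sq_add_snd_sq (r θ : ℝ) :
    (r • circleVec θ).1 ^ 2 + (r • circleVec θ).2 ^ 2 = r ^ 2 := by
  simp only [circleVec, Prod.smul_mk, smul_eq_mul]
  linear_combination r ^ 2 * Real.cos_sq_add_sin_sq θ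

lemma circleVec_ne_zero (θ : ℝ) : circleVec θ ≠ 0 := by
  intro h
  simpa [h] using smul_circleVec_fst_sq_add_snd_sq 1 θ

lemma integral_inv_smul_clm_apply_eq_polar (Φ : ℝ × ℝ → ℝ × ℝ →L[ℝ] V) (A : ℝ × ℝ →L[ℝ] ℝ × ℝ) :
    ∫ z : ℝ × ℝ, (z.1 ^ 2 + z.2 ^ 2)⁻¹ • Φ z (A z) =
      ∫ p in polarCoord.target, Φ (p.1 • circleVec p.2) (A (circleVec p.2)) := by
  rw [← integral_comp_polarCoord_symm]
  refine setIntegral_congr_fun polarCoord.open_target.measurableSet fun p hp ↦ ?_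
  have hp₁ : p.1 ≠ 0 := ne_of_gt hp.1
  have hcancel : p.1 * ((p.1 ^ 2)⁻¹ * p.1) = 1 := by field_simp
  simp only [polarCoord_symm_eq_smul_circleVec, smul_circleVec_fst_sq_add_snd_sq, map_smul,
    smul_smul, hcancel, one_smul]

lemma integrableOn_polarCoord_target {W : Type*} [NormedAddCommGroup W] {g : ℝ × ℝ → W}
    (hg : Continuous g) {K : Set (ℝ × ℝ)}
    (hK : IsCompact K) (hgK : ∀ p, p.1 • circleVec p.2 ∉ K → g p = 0) :
    IntegrableOn g polarCoord.target := by
  obtain ⟨R, hR⟩ : BddAbove ((fun z : ℝ × ℝ ↦ z.1 ^ 2 + z.2 ^ 2) '' K) :=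
    hK.bddAbove_image (by fun_prop)
  have hbox : IntegrableOn g (Icc 0 (√R) ×ˢ Icc (-Real.pi) Real.pi) :=
    hg.continuousOn.integrableOn_compact (isCompact_Icc.prod isCompact_Icc)
  refine hbox.of_forall_sdiff_eq_zero polarCoord.open_target.measurableSet ?_
  rintro ⟨r, θ⟩ ⟨⟨hr, hθ⟩, hout⟩
  refine hgK _ fun hmem ↦ hout ⟨⟨le_of_lt hr, Real.le_sqrt_of_sq_le ?_⟩, Ioo_subset_Icc_self hθ⟩
  simpa only [smul_circleVec_fst_sq_add_snd_sq] using hR (mem_image_of_mem _ hmem)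

lemma integrableOn_polarCoord_target_fderiv {ψ : ℝ × ℝ → V} (hψ : ContDiff ℝ 1 ψ)
    (hc : HasCompactSupport ψ) (A : ℝ × ℝ →L[ℝ] ℝ × ℝ) :
    IntegrableOn (fun p ↦ fderiv ℝ ψ (p.1 • circleVec p.2) (A (circleVec p.2)))
      polarCoord.target := by
  have hu : Continuous fun p : ℝ × ℝ ↦ circleVec p.2 := continuous_circleVec.comp continuous_snd
  refine integrableOn_polarCoord_target ?_ (hc.fderiv ℝ) fun p hp ↦ ?_
  · exact ((hψ.continuous_fderiv one_ne_zero).comp (continuous_fst.smul hu)).clm_apply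
      (A.continuous.comp hu)
  · rw [image_eq_zero_of_notMem_tsupport hp, zero_apply]

variable [CompleteSpace V]

lemma integral_Ioi_fderiv_smul_apply {E : Type*} [NormedAddCommGroup E] [NormedSpace ℝ E]
    {ψ : E → V} (hψ : ContDiff ℝ 1 ψ) (hc : HasCompactSupport ψ) {v : E} (hv : v ≠ 0) :
    ∫ r in Ioi (0 : ℝ), fderiv ℝ ψ (r • v) v = -ψ 0 := by
  have hderiv (r : ℝ) : deriv (fun r : ℝ ↦ ψ (r • v)) r = fderiv ℝ ψ (r • v) v := by
    have hray : HasDerivAt (fun r : ℝ ↦ r • v) v r := by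
      simpa using (hasDerivAt_id r).smul_const v
    exact ((hψ.differentiable one_ne_zero _).hasFDerivAt.comp_hasDerivAt r hray).deriv
  have hray_support : HasCompactSupport fun r : ℝ ↦ ψ (r • v) :=
    hc.comp_isClosedEmbedding (isClosedEmbedding_smul_left hv)
  simpa [hderiv] using hray_support.integral_Ioi_deriv_eq (by fun_prop) 0

lemma integral_Ioo_fderiv_quarterTurn_circleVec {ψ : ℝ × ℝ → V} (hψ : ContDiff ℝ 1 ψ) {r : ℝ}
    (hr : r ≠ 0) :
    ∫ θ in Ioo (-Real.pi) Real.pi, fderiv ℝ ψ (r • circleVec θ) (quarterTurn (circleVec θ)) =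
      0 := by
  have hderiv (θ : ℝ) : HasDerivAt (fun θ ↦ r⁻¹ • ψ (r • circleVec θ))
      (fderiv ℝ ψ (r • circleVec θ) (quarterTurn (circleVec θ))) θ := by
    have h := ((hψ.differentiable one_ne_zero _).hasFDerivAt.comp_hasDerivAt θ
      ((hasDerivAt_circleVec θ).const_smul r)).const_smul r⁻¹
    rwa [map_smul, inv_smul_smul₀ hr] at h
  have hcont : Continuous fun θ ↦
      fderiv ℝ ψ (r • circleVec θ) (quarterTurn (circleVec θ)) :=
    ((hψ.continuous_fderiv one_ne_zero).comp (continuous_circleVec.const_smul r)).clm_apply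
      (quarterTurn.continuous.comp continuous_circleVec)
  rw [← integral_Ioc_eq_integral_Ioo,
    ← intervalIntegral.integral_of_le (by linarith [Real.pi_pos]),
    intervalIntegral.integral_eq_sub_of_hasDerivAt (fun θ _ ↦ hderiv θ)
      (hcont.intervalIntegrable _ _)]
  simp [circleVec]

lemma integral_inv_smul_fderiv_self {ψ : ℝ × ℝ → V} (hψ : ContDiff ℝ 1 ψ)
    (hc : HasCompactSupport ψ) :
    ∫ z : ℝ × ℝ, (z.1 ^ 2 + z.2 ^ 2)⁻¹ • fderiv ℝ ψ z z = -(2 * Real.pi) • ψ 0 := by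
  have hint := integrableOn_polarCoord_target_fderiv hψ hc (.id ℝ _)
  rw [IntegrableOn, polarCoord_target, Measure.volume_eq_prod, ← Measure.prod_restrict] at hint
  have hpi : 0 ≤ Real.pi := Real.pi_pos.le
  calc ∫ z : ℝ × ℝ, (z.1 ^ 2 + z.2 ^ 2)⁻¹ • fderiv ℝ ψ z z
    _ = ∫ p in polarCoord.target, fderiv ℝ ψ (p.1 • circleVec p.2) (circleVec p.2) :=
      integral_inv_smul_clm_apply_eq_polar (fderiv ℝ ψ) (.id ℝ _)
    _ = ∫ θ in Ioo (-Real.pi) Real.pi, ∫ r in Ioi (0 : ℝ),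
          fderiv ℝ ψ (r • circleVec θ) (circleVec θ) := by
      rw [polarCoord_target, Measure.volume_eq_prod, ← Measure.prod_restrict]
      exact integral_prod_symm _ hint
    _ = -(2 * Real.pi) • ψ 0 := by
      simp only [integral_Ioi_fderiv_smul_apply hψ hc (circleVec_ne_zero _), setIntegral_const,
        Real.volume_real_Ioo_of_le (neg_le_self hpi), sub_neg_eq_add, ← two_mul, smul_neg,
        neg_smul]

lemma integral_inv_smul_fderiv_quarterTurn {ψ : ℝ × ℝ → V} (hψ : ContDiff ℝ 1 ψ)
    (hc : HasCompactSupport ψ) :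
    ∫ z : ℝ × ℝ, (z.1 ^ 2 + z.2 ^ 2)⁻¹ • fderiv ℝ ψ z (quarterTurn z) = 0 := by
  have hint := integrableOn_polarCoord_target_fderiv hψ hc quarterTurn
  rw [polarCoord_target, Measure.volume_eq_prod] at hint
  rw [integral_inv_smul_clm_apply_eq_polar, polarCoord_target, Measure.volume_eq_prod,
    setIntegral_prod _ hint]
  exact setIntegral_eq_zero_of_forall_eq_zero fun r hr ↦
    integral_Ioo_fderiv_quarterTurn_circleVec hψ (ne_of_gt hr)

end PolarCoordinates

section FundamentalSolution

/-- The Euclidean inner product of the plane, as a bilinear map on `ℝ × ℝ`. -/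
noncomputable def planeDot : ℝ × ℝ →L[ℝ] ℝ × ℝ →L[ℝ] ℝ :=
  (ContinuousLinearMap.mul ℝ ℝ).bilinearComp (.fst ℝ ℝ ℝ) (.fst ℝ ℝ ℝ) +
    (ContinuousLinearMap.mul ℝ ℝ).bilinearComp (.snd ℝ ℝ ℝ) (.snd ℝ ℝ ℝ)

@[simp]
lemma planeDot_apply (v w : ℝ × ℝ) : planeDot v w = v.1 * w.1 + v.2 * w.2 := rfl

/-- The gradient `∇E(z) = z / (2π|z|²)` of the fundamental solution, with value `0` at `z = 0`. -/
noncomputable def gradEfun (z : ℝ × ℝ) : ℝ × ℝ :=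
  (2 * Real.pi * (z.1 ^ 2 + z.2 ^ 2))⁻¹ • z

lemma fst_sq_add_snd_sq_pos {z : ℝ × ℝ} (hz : z ≠ 0) : 0 < z.1 ^ 2 + z.2 ^ 2 := by
  contrapose! hz
  have h₁ : z.1 = 0 := by nlinarith [sq_nonneg z.1, sq_nonneg z.2]
  have h₂ : z.2 = 0 := by nlinarith [sq_nonneg z.1, sq_nonneg z.2]
  exact Prod.ext h₁ h₂

lemma hasFDerivAt_Efun {z : ℝ × ℝ} (hz : z ≠ 0) :
    HasFDerivAt Efun (planeDot (gradEfun z)) z := by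
  have hpos := fst_sq_add_snd_sq_pos hz
  have hE : Efun = fun w ↦ (4 * Real.pi)⁻¹ * Real.log (w.1 ^ 2 + w.2 ^ 2) := by
    ext w
    rw [Efun, Real.log_sqrt (by positivity)]
    ring
  have hlog := ((((hasFDerivAt_fst (𝕜 := ℝ) (p := z)).pow 2).add
    ((hasFDerivAt_snd (𝕜 := ℝ) (p := z)).pow 2)).log hpos.ne').const_mul (4 * Real.pi)⁻¹
  rw [hE]
  refine hlog.congr_fderiv (ContinuousLinearMap.ext fun v ↦ ?_)
  simp only [smul_apply, add_apply, ContinuousLinearMap.coe_fst', ContinuousLinearMap.coe_snd',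
    Pi.add_apply, nsmul_eq_mul, smul_eq_mul, Nat.cast_ofNat, Nat.add_one_sub_one, pow_one,
    planeDot_apply, gradEfun, Prod.smul_fst, Prod.smul_snd]
  field_simp
  ring

lemma norm_sq_le_fst_sq_add_snd_sq (z : ℝ × ℝ) : ‖z‖ ^ 2 ≤ z.1 ^ 2 + z.2 ^ 2 := by
  rw [Prod.norm_def]
  rcases max_choice ‖z.1‖ ‖z.2‖ with h | h <;> rw [h, Real.norm_eq_abs, sq_abs] <;>
    nlinarith [sq_nonneg z.1, sq_nonneg z.2]

lemma norm_gradEfun_le (z : ℝ × ℝ) : ‖gradEfun z‖ ≤ ‖z‖⁻¹ := by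
  rcases eq_or_ne z 0 with rfl | hz
  · simp [gradEfun]
  have : 0 < ‖z‖ := norm_pos_iff.2 hz
  have hpi : 1 ≤ 2 * Real.pi := by linarith [Real.pi_gt_three]
  have hle : ‖z‖ ^ 2 ≤ 2 * Real.pi * (z.1 ^ 2 + z.2 ^ 2) :=
    (norm_sq_le_fst_sq_add_snd_sq z).trans (le_mul_of_one_le_left (by positivity) hpi)
  calc ‖gradEfun z‖ = (2 * Real.pi * (z.1 ^ 2 + z.2 ^ 2))⁻¹ * ‖z‖ := by
        rw [gradEfun, norm_smul, norm_inv, Real.norm_of_nonneg (by positivity)]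
    _ ≤ (‖z‖ ^ 2)⁻¹ * ‖z‖ := by gcongr
    _ = ‖z‖⁻¹ := by field_simp

lemma locallyIntegrable_gradEfun : LocallyIntegrable gradEfun := by
  refine locallyIntegrable_of_norm_le_rpow (C := 1) (α := 1) (by simp) (by simp) ?_ ?_
  · filter_upwards with z
    simpa [Real.rpow_neg_one] using norm_gradEfun_le z
  · have hmeas : Measurable gradEfun := by
      unfold gradEfun
      fun_prop
    exact hmeas.aestronglyMeasurable

lemma planeDot_gradEfun_planeGrad (f : ℝ × ℝ → ℝ) (z w : ℝ × ℝ) :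
    planeDot (gradEfun z) (planeGrad f w) =
      (2 * Real.pi)⁻¹ * ((z.1 ^ 2 + z.2 ^ 2)⁻¹ * fderiv ℝ f w z) := by
  rw [fderiv_apply_eq_dirDeriv]
  simp only [planeDot_apply, gradEfun, planeGrad, Prod.smul_fst, Prod.smul_snd, smul_eq_mul,
    mul_inv]
  ring

lemma planeDot_gradEfun_planePerpGrad (f : ℝ × ℝ → ℝ) (z w : ℝ × ℝ) :
    planeDot (gradEfun z) (planePerpGrad f w) =
      -((2 * Real.pi)⁻¹ * ((z.1 ^ 2 + z.2 ^ 2)⁻¹ * fderiv ℝ f w (quarterTurn z))) := by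
  have hturn : quarterTurn z = (-z.2, z.1) := rfl
  rw [fderiv_apply_eq_dirDeriv, hturn]
  simp only [planeDot_apply, gradEfun, planePerpGrad, Prod.smul_fst, Prod.smul_snd, smul_eq_mul,
    mul_inv]
  ring

lemma convolution_gradEfun_planeGrad {f : ℝ × ℝ → ℝ} (hf : ContDiff ℝ 1 f)
    (hc : HasCompactSupport f) : gradEfun ⋆[planeDot] planeGrad f = f := by
  ext x
  have hray := integral_inv_smul_fderiv_self (ψ := fun z ↦ f (x - z)) (by fun_prop)
    (hc.comp_homeomorph (Homeomorph.subLeft x))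
  simp only [fderiv_comp_const_sub_apply (hf.differentiable one_ne_zero), sub_zero, smul_eq_mul,
    mul_neg, neg_mul, integral_neg, neg_inj] at hray
  simp only [convolution_def, planeDot_gradEfun_planeGrad, integral_const_mul, hray]
  field_simp

lemma convolution_gradEfun_planePerpGrad {f : ℝ × ℝ → ℝ} (hf : ContDiff ℝ 1 f)
    (hc : HasCompactSupport f) : gradEfun ⋆[planeDot] planePerpGrad f = 0 := by
  ext x
  have hcircle := integral_inv_smul_fderiv_quarterTurn (ψ := fun z ↦ f (x - z)) (by fun_prop)
    (hc.comp_homeomorph (Homeomorph.subLeft x))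
  simp only [fderiv_comp_const_sub_apply (hf.differentiable one_ne_zero), smul_eq_mul,
    mul_neg, integral_neg, neg_eq_zero] at hcircle
  simp only [convolution_def, planeDot_gradEfun_planePerpGrad, integral_neg, integral_const_mul,
    hcircle, mul_zero, neg_zero, Pi.zero_apply]

lemma planeLaplacian_convolution_gradEfun {H : ℝ × ℝ → ℝ × ℝ} (hH : ContDiff ℝ 2 H)
    (hc : HasCompactSupport H) : planeLaplacian (gradEfun ⋆[planeDot] H) = planeDiv H := by
  have hdiv := contDiff_planeDiv hH
  have hcurl := contDiff_planeCurl hH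
  have hcdiv := hasCompactSupport_planeDiv hc
  have hccurl := hasCompactSupport_planeCurl hc
  rw [planeLaplacian_convolution_right planeDot locallyIntegrable_gradEfun hH hc,
    planeLaplacian_eq_planeGrad_planeDiv_add_planePerpGrad_planeCurl hH,
    ((hasCompactSupport_planeGrad hcdiv).convolutionExists_right planeDot
      locallyIntegrable_gradEfun (continuous_planeGrad hdiv)).distrib_add
      ((hasCompactSupport_planePerpGrad hccurl).convolutionExists_right planeDot
        locallyIntegrable_gradEfun (continuous_planePerpGrad hcurl)),
    convolution_gradEfun_planeGrad hdiv hcdiv, convolution_gradEfun_planePerpGrad hcurl hccurl,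
    add_zero]

end FundamentalSolution

section Reflection

/-- The reflection `y ↦ y* = (y₁, -y₂)` across the boundary of the half-plane. -/
def reflect : (ℝ × ℝ) ≃L[ℝ] (ℝ × ℝ) :=
  (ContinuousLinearEquiv.refl ℝ ℝ).prodCongr (ContinuousLinearEquiv.neg ℝ)

@[simp]
lemma reflect_apply (y : ℝ × ℝ) : reflect y = (y.1, -y.2) := rfl

lemma reflect_reflect (y : ℝ × ℝ) : reflect (reflect y) = y := by simp

lemma measurePreserving_reflect : MeasurePreserving reflect :=
  (MeasurePreserving.id volume).prod (Measure.measurePreserving_neg volume)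

/-- The mirror image `y ↦ (F(y*))*` of a vector field `F`. -/
def reflectField (F : ℝ × ℝ → ℝ × ℝ) : ℝ × ℝ → ℝ × ℝ := reflect ∘ F ∘ reflect

variable {F : ℝ × ℝ → ℝ × ℝ}

lemma contDiff_reflectField {n : WithTop ℕ∞} (hF : ContDiff ℝ n F) :
    ContDiff ℝ n (reflectField F) :=
  reflect.contDiff.comp (hF.comp reflect.contDiff)

lemma hasCompactSupport_reflectField (hF : HasCompactSupport F) :
    HasCompactSupport (reflectField F) :=
  (hF.comp_homeomorph reflect.toHomeomorph).comp_left (map_zero reflect)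

lemma measurableEmbedding_reflect : MeasurableEmbedding reflect :=
  reflect.toHomeomorph.measurableEmbedding

lemma convolution_reflectField_eq_integral (k : ℝ × ℝ → ℝ × ℝ) (x : ℝ × ℝ) :
    (k ⋆[planeDot] reflectField F) x = ∫ y, planeDot (k (x - reflect y)) (reflect (F y)) := by
  rw [convolution_eq_swap, ← measurePreserving_reflect.integral_comp measurableEmbedding_reflect]
  simp only [reflectField, comp_apply, reflect_reflect]

lemma integrable_convolution_reflectField {k : ℝ × ℝ → ℝ × ℝ} {x : ℝ × ℝ}
    (h : ConvolutionExistsAt k (reflectField F) x planeDot) :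
    Integrable fun y ↦ planeDot (k (x - reflect y)) (reflect (F y)) := by
  have h' := (measurePreserving_reflect.integrable_comp_emb measurableEmbedding_reflect).2
    h.integrable_swap
  simpa only [comp_def, reflectField, reflect_reflect] using h'

end Reflection

section NeumannPotential

lemma Nfun_eq_Efun_sub_add_Efun_sub_reflect (x : ℝ × ℝ) :
    Nfun x = fun y ↦ Efun (x - y) + Efun (x - reflect y) := by
  ext y
  simp [Nfun, Prod.sub_def]

lemma hasFDerivAt_Nfun {x y : ℝ × ℝ} (h : y ≠ x) (h' : y ≠ reflect x) :
    HasFDerivAt (Nfun x)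
      (-(planeDot (gradEfun (x - y)) +
        (planeDot (gradEfun (x - reflect y))).comp (reflect : ℝ × ℝ →L[ℝ] ℝ × ℝ))) y := by
  have hne : x - y ≠ 0 := sub_ne_zero.2 h.symm
  have hne' : x - reflect y ≠ 0 := by
    refine sub_ne_zero.2 ?_
    rintro rfl
    exact h' (reflect_reflect y).symm
  have hdirect := (hasFDerivAt_Efun hne).comp y ((hasFDerivAt_id y).const_sub x)
  have hmirror := (hasFDerivAt_Efun hne').comp y (reflect.hasFDerivAt.const_sub x)
  rw [Nfun_eq_Efun_sub_add_Efun_sub_reflect]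
  refine (hdirect.add hmirror).congr_fderiv (ContinuousLinearMap.ext fun v ↦ ?_)
  simp only [add_apply, neg_apply, ContinuousLinearMap.comp_apply, map_neg,
    ContinuousLinearMap.id_apply, neg_add]

lemma deriv_Nfun_mul_add_deriv_Nfun_mul {x y : ℝ × ℝ} (h : y ≠ x) (h' : y ≠ reflect x)
    (v : ℝ × ℝ) :
    deriv (fun a ↦ Nfun x (a, y.2)) y.1 * v.1 + deriv (fun b ↦ Nfun x (y.1, b)) y.2 * v.2 =
      -(planeDot (gradEfun (x - y)) v + planeDot (gradEfun (x - reflect y)) (reflect v)) := by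
  have hN := hasFDerivAt_Nfun h h'
  calc
    _ = fderiv ℝ (Nfun x) y v := by
      rw [deriv_prodMk_left hN.differentiableAt, deriv_prodMk_right hN.differentiableAt,
        fderiv_apply_eq_dirDeriv, smul_eq_mul, smul_eq_mul, mul_comm v.1, mul_comm v.2]
    _ = _ := by rw [hN.fderiv]; rfl

variable {F : ℝ × ℝ → ℝ × ℝ}

lemma pot_eq_neg_convolution (hF : Continuous F) (hc : HasCompactSupport F)
    (hsupp : support F ⊆ {p | 0 < p.2}) :
    pot F = -(gradEfun ⋆[planeDot] (F + reflectField F)) := by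
  ext x
  have hex : ConvolutionExistsAt gradEfun F x planeDot :=
    hc.convolutionExists_right planeDot locallyIntegrable_gradEfun hF x
  have hex' : ConvolutionExistsAt gradEfun (reflectField F) x planeDot :=
    (hasCompactSupport_reflectField hc).convolutionExists_right planeDot
      locallyIntegrable_gradEfun
      (reflect.continuous.comp (hF.comp reflect.continuous)) x
  calc pot F x
    _ = ∫ y, (deriv (fun a ↦ Nfun x (a, y.2)) y.1 * (F y).1 +
          deriv (fun b ↦ Nfun x (y.1, b)) y.2 * (F y).2) := by
      refine setIntegral_eq_integral_of_forall_compl_eq_zero fun y hy ↦ ?_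
      simp [notMem_support.1 fun h ↦ hy (hsupp h)]
    _ = ∫ y, -(planeDot (gradEfun (x - y)) (F y) +
          planeDot (gradEfun (x - reflect y)) (reflect (F y))) := by
      refine integral_congr_ae ?_
      filter_upwards [Measure.ae_ne volume x, Measure.ae_ne volume (reflect x)] with y h h'
      exact deriv_Nfun_mul_add_deriv_Nfun_mul h h' (F y)
    _ = -(gradEfun ⋆[planeDot] (F + reflectField F)) x := by
      rw [integral_neg, integral_add hex.integrable_swap (integrable_convolution_reflectField hex'),
        hex.distrib_add hex', convolution_reflectField_eq_integral, convolution_eq_swap]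

lemma contDiff_pot {n : ℕ∞} (hF : ContDiff ℝ n F) (hc : HasCompactSupport F)
    (hsupp : support F ⊆ {p | 0 < p.2}) : ContDiff ℝ n (pot F) := by
  rw [pot_eq_neg_convolution hF.continuous hc hsupp]
  exact ((hc.add (hasCompactSupport_reflectField hc)).contDiff_convolution_right planeDot
    locallyIntegrable_gradEfun (hF.add (contDiff_reflectField hF))).neg

lemma reflectField_eventuallyEq_zero (hsupp : support F ⊆ {p | 0 < p.2}) {x : ℝ × ℝ}
    (hx : 0 < x.2) : reflectField F =ᶠ[𝓝 x] 0 := by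
  filter_upwards [(isOpen_lt continuous_const continuous_snd).mem_nhds hx] with y hy
  have hFy : F (reflect y) = 0 :=
    notMem_support.1 fun h ↦ (neg_pos.1 (hsupp h)).not_gt hy
  simp only [reflectField, comp_apply, hFy, map_zero, Pi.zero_apply]

lemma planeLaplacian_pot (hF : ContDiff ℝ 2 F) (hc : HasCompactSupport F)
    (hsupp : support F ⊆ {p | 0 < p.2}) {x : ℝ × ℝ} (hx : 0 < x.2) :
    planeLaplacian (pot F) x = -planeDiv F x := by
  have hlocal : fderiv ℝ (F + reflectField F) x = fderiv ℝ F x :=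
    EventuallyEq.fderiv_eq <| by
      simpa using (EventuallyEq.refl (𝓝 x) F).add (reflectField_eventuallyEq_zero hsupp hx)
  have hH : ContDiff ℝ 2 (F + reflectField F) := hF.add (contDiff_reflectField hF)
  rw [pot_eq_neg_convolution hF.continuous hc hsupp, planeLaplacian_neg,
    planeLaplacian_convolution_gradEfun hH (hc.add (hasCompactSupport_reflectField hc))]
  simp only [Pi.neg_apply, planeDiv, dirDeriv, hlocal]

lemma pot_prodMk_neg (F : ℝ × ℝ → ℝ × ℝ) (a b : ℝ) : pot F (a, -b) = pot F (a, b) := by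
  have hN : Nfun (a, -b) = Nfun (a, b) := by
    ext y
    have hneg_add : (-b + y.2) ^ 2 = (b - y.2) ^ 2 := by ring
    have hneg_sub : (-b - y.2) ^ 2 = (b + y.2) ^ 2 := by ring
    simp only [Nfun, Efun, hneg_add, hneg_sub]
    exact add_comm _ _
  simp only [pot, hN]

lemma deriv_pot_zero (F : ℝ × ℝ → ℝ × ℝ) (a : ℝ) : deriv (fun b ↦ pot F (a, b)) 0 = 0 := by
  have h := deriv_comp_neg (fun b ↦ pot F (a, b)) 0
  simp only [pot_prodMk_neg, neg_zero] at h
  exact self_eq_neg.1 h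

end NeumannPotential

section HelmholtzProjection

variable {F : ℝ × ℝ → ℝ × ℝ}

lemma QF1_eq (hpot : Differentiable ℝ (pot F)) :
    QF1 F = fun x ↦ (F x).1 + dirDeriv (1, 0) (pot F) x := by
  ext x
  rw [QF1, deriv_prodMk_left (hpot x)]

lemma QF2_eq (hpot : Differentiable ℝ (pot F)) :
    QF2 F = fun x ↦ (F x).2 + dirDeriv (0, 1) (pot F) x := by
  ext x
  rw [QF2, deriv_prodMk_right (hpot x)]

lemma deriv_QF1_add_deriv_QF2 (hF : Differentiable ℝ F) (hpot : ContDiff ℝ 2 (pot F))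
    (x : ℝ × ℝ) :
    deriv (fun a ↦ QF1 F (a, x.2)) x.1 + deriv (fun b ↦ QF2 F (x.1, b)) x.2 =
      planeDiv F x + planeLaplacian (pot F) x := by
  have hd (v : ℝ × ℝ) : DifferentiableAt ℝ (dirDeriv v (pot F)) x :=
    (contDiff_dirDeriv hpot one_add_one_eq_two.le v).differentiable one_ne_zero x
  have hQ₁ : HasFDerivAt (fun y ↦ (F y).1 + dirDeriv (1, 0) (pot F) y) _ x :=
    (hF x).hasFDerivAt.fst.add (hd (1, 0)).hasFDerivAt
  have hQ₂ : HasFDerivAt (fun y ↦ (F y).2 + dirDeriv (0, 1) (pot F) y) _ x :=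
    (hF x).hasFDerivAt.snd.add (hd (0, 1)).hasFDerivAt
  rw [QF1_eq (hpot.differentiable two_ne_zero), QF2_eq (hpot.differentiable two_ne_zero),
    deriv_prodMk_left hQ₁.differentiableAt, deriv_prodMk_right hQ₂.differentiableAt,
    dirDeriv, dirDeriv, hQ₁.fderiv, hQ₂.fderiv]
  exact add_add_add_comm _ _ _ _

lemma continuous_QF2 (hF : Continuous F) (hpot : ContDiff ℝ 1 (pot F)) : Continuous (QF2 F) := by
  rw [QF2_eq (hpot.differentiable one_ne_zero)]
  exact hF.snd.add (contDiff_dirDeriv hpot (zero_add 1).le _).continuous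

end HelmholtzProjection

theorem stmt19_general (F : ℝ × ℝ → ℝ × ℝ) (hF : ContDiff ℝ 2 F) (hcpt : HasCompactSupport F)
    (hsupp : support F ⊆ {p : ℝ × ℝ | 0 < p.2}) :
    (∀ x : ℝ × ℝ, 0 < x.2 →
      deriv (fun a => QF1 F (a, x.2)) x.1 + deriv (fun b => QF2 F (x.1, b)) x.2 = 0)
    ∧ ContinuousOn (QF2 F) {p : ℝ × ℝ | 0 ≤ p.2}
    ∧ ∀ x₁ : ℝ, QF2 F (x₁, 0) = 0 := by
  have hpot : ContDiff ℝ 2 (pot F) := contDiff_pot (n := 2) hF hcpt hsupp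
  refine ⟨fun x hx ↦ ?_, ?_, fun x₁ ↦ ?_⟩
  · rw [deriv_QF1_add_deriv_QF2 (hF.differentiable two_ne_zero) hpot,
      planeLaplacian_pot hF hcpt hsupp hx, add_neg_cancel]
  · exact (continuous_QF2 hF.continuous (hpot.of_le one_le_two)).continuousOn
  · have hF₀ : F (x₁, 0) = 0 := notMem_support.1 fun h ↦ absurd (hsupp h) (lt_irrefl (0 : ℝ))
    simp only [QF2, hF₀, deriv_pot_zero, Prod.snd_zero, add_zero]

/-- For a smooth `F` with compact support in the open upper half-plane, the Helmholtz
projection `ℚF` is divergence-free in `ℝ²₊`, and its second component extends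
continuously to the boundary with value `0` there. -/
theorem stmt19 (F : ℝ × ℝ → ℝ × ℝ)
    (hF : ContDiff ℝ (⊤ : ℕ∞) F)
    (hcpt : HasCompactSupport F)
    (hsupp : tsupport F ⊆ {p : ℝ × ℝ | 0 < p.2}) :
    (∀ x : ℝ × ℝ, 0 < x.2 →
      deriv (fun a => QF1 F (a, x.2)) x.1 + deriv (fun b => QF2 F (x.1, b)) x.2 = 0)
    ∧ ContinuousOn (QF2 F) {p : ℝ × ℝ | 0 ≤ p.2}
    ∧ ∀ x₁ : ℝ, QF2 F (x₁, 0) = 0 :=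
  stmt19_general F (hF.of_le (WithTop.coe_le_coe.2 (le_top : (2 : ℕ∞) ≤ ⊤))) hcpt
    ((subset_tsupport F).trans hsupp)
end
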